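/- arXiv:2202.10521 — 3 statements merged into one kernel-verified Lean document; each statement's English description precedes it below -/
import Mathlib

section
/- Let F : ℝⁿ → X be a Bohr almost periodic function. If for every vector a = (a₁,…,aₙ) ∈ ℝⁿ all of whose coordinates are nonzero the Cesàro means (1/k)·Σ_{j=0}^{k−1} F(t + j·a) converge to 0 in X as k → ∞, uniformly in t ∈ ℝⁿ, then F(t) = 0 for all t ∈ ℝⁿ. -/
open Filter Topology

/-!
An almost periodic `F` extends to a continuous `f` on its Bohr hull `K`, the compact group obtained
by completing `G` for the seminorm `s ↦ sup_t ‖F(t + s) - F(t)‖`. The translations `U_s` on `L²(K)`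
and the operator `∫ f(s) U_s ds`, which is nonzero when `f` is, lie in the bicommutant of the `U_s`,
a commutative C⋆-algebra. By Gelfand duality some character `φ` of it does not vanish at that
operator, so `χ(s) = φ(U_s)` is a character of `K` and `Λ g = φ(∫ g(s) U_s ds)` is a continuous
functional with `Λ f ≠ 0` and `χ(a) Λ(g(a + ·)) = Λ g`. If `χ(a) = 1`, then `Λ` takes the value
`Λ f` at every Cesàro mean of `f` along `a`, so these means cannot tend to `0`. Finally, the kernel
of a continuous character of `ℝⁿ` contains some `r • (1, …, 1)` with `r ≠ 0`.
-/

open MeasureTheory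
open scoped ENNReal BoundedContinuousFunction

/-! ### Eigenfunctionals of commuting operators -/

section Bicommutant

variable {A : Type*} [CStarAlgebra A]

theorem exists_algHom_apply_ne_zero (hcomm : ∀ x y : A, x * y = y * x) {a : A} (ha : a ≠ 0) :
    ∃ φ : A →ₐ[ℂ] ℂ, φ a ≠ 0 := by
  let : CommCStarAlgebra A := { ‹CStarAlgebra A› with mul_comm := hcomm }
  by_contra! h
  refine ha ((gelfandTransform_isometry A).injective ?_)
  ext φ
  simpa using h (WeakDual.CharacterSpace.toAlgHom φ)

/-- The restriction of a character of a C⋆-algebra to the unitary group. -/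
def unitaryToCircle (φ : A →ₐ[ℂ] ℂ) : unitary A →* Circle where
  toFun u := ⟨φ (u : A), mem_sphere_zero_iff_norm.2
    (spectrum.norm_eq_one_of_unitary u.2 (AlgHom.apply_mem_spectrum φ (u : A)))⟩
  map_one' := Subtype.ext (map_one φ)
  map_mul' u v := Subtype.ext (map_mul φ (u : A) v)

theorem exists_eigenfunctional_of_mul_comm {K E : Type*} [AddCommGroup K] [NormedAddCommGroup E]
    [NormedSpace ℂ E] (hcomm : ∀ x y : A, x * y = y * x) (u : AddChar K (unitary A))
    (I : E →L[ℂ] A) (T : K → E → E) (hI : ∀ a x, u a * I (T a x) = I x) {x : E} (hx : I x ≠ 0) :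
    ∃ (χ : AddChar K Circle) (Λ : E →L[ℂ] ℂ), Λ x ≠ 0 ∧ ∀ a y, χ a * Λ (T a y) = Λ y := by
  obtain ⟨φ, hφ⟩ := exists_algHom_apply_ne_zero hcomm hx
  refine ⟨(unitaryToCircle φ).compAddChar u, φ.toContinuousLinearMap ∘L I, hφ, fun a y => ?_⟩
  calc φ (u a : A) * φ (I (T a y)) = φ (u a * I (T a y)) := (map_mul φ _ _).symm
    _ = φ (I y) := by rw [hI]

/-- The bicommutant of a subset `S` of a C⋆-algebra, where the commutant of `S` consists of the
elements commuting with every `s ∈ S` and with every `star s`. -/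
abbrev bicommutant (S : Set A) : StarSubalgebra ℂ A :=
  StarSubalgebra.centralizer ℂ (StarSubalgebra.centralizer ℂ S : Set A)

instance (S : Set A) : IsClosed (bicommutant S : Set A) := Set.isClosed_centralizer _

theorem mem_bicommutant {S : Set A} {x : A} :
    x ∈ bicommutant S ↔ ∀ y ∈ StarSubalgebra.centralizer ℂ S, y * x = x * y := by
  rw [StarSubalgebra.mem_centralizer_iff]
  exact ⟨fun h y hy => (h y hy).1, fun h y hy => ⟨h y hy, h _ (star_mem hy)⟩⟩

theorem subset_bicommutant (S : Set A) : S ⊆ bicommutant S := fun _x hx =>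
  mem_bicommutant.2 fun _y hy => ((StarSubalgebra.mem_centralizer_iff ℂ).1 hy _ hx).1.symm

theorem bicommutant_mul_comm {S : Set A} (hcomm : ∀ x ∈ S, ∀ y ∈ S, x * y = y * x)
    (hstar : ∀ x ∈ S, star x ∈ S) (x y : bicommutant S) : x * y = y * x := by
  have hSS : S ∪ star S = S := Set.union_eq_left.2 fun x hx => star_star x ▸ hstar _ hx
  have hmem (z : bicommutant S) : (z : A) ∈ S.centralizer.centralizer := by
    have hz : (z : A) ∈ (S ∪ star S).centralizer.centralizer := by
      rw [← StarSubalgebra.coe_centralizer_centralizer (R := ℂ)]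
      exact z.2
    rwa [hSS] at hz
  exact Subtype.ext (Set.centralizer_centralizer_comm_of_comm hcomm _ (hmem x) _ (hmem y))

end Bicommutant

section RepresentationAlgebra

variable {K H : Type*} [AddCommGroup K] [NormedAddCommGroup H] [InnerProductSpace ℂ H]
  [CompleteSpace H] {U : AddChar K (unitary (H →L[ℂ] H))}

/-- The von Neumann algebra generated by a unitary representation of an abelian group, which is
encoded as an `AddChar` into the unitary operators. -/
noncomputable abbrev representationAlgebra (U : AddChar K (unitary (H →L[ℂ] H))) :
    StarSubalgebra ℂ (H →L[ℂ] H) :=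
  bicommutant (Set.range fun s => (U s : H →L[ℂ] H))

theorem representationAlgebra_mul_comm (S T : representationAlgebra U) : S * T = T * S := by
  refine bicommutant_mul_comm ?_ ?_ S T
  · rintro _ ⟨s, rfl⟩ _ ⟨t, rfl⟩
    exact congrArg Subtype.val
      (show U s * U t = U t * U s by rw [← U.map_add_eq_mul, add_comm, U.map_add_eq_mul])
  · rintro _ ⟨s, rfl⟩
    refine ⟨-s, ?_⟩
    simp only [AddChar.map_neg_eq_inv, ← Unitary.coe_star, Unitary.star_eq_inv]

/-- A unitary representation of an abelian group, viewed as taking values in the algebra that it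
generates. -/
noncomputable def unitaryInAlgebra (U : AddChar K (unitary (H →L[ℂ] H))) :
    AddChar K (unitary (representationAlgebra U)) where
  toFun s := ⟨⟨U s, subset_bicommutant _ ⟨s, rfl⟩⟩, Subtype.ext (U s).2.1, Subtype.ext (U s).2.2⟩
  map_zero_eq_one' := Subtype.ext (Subtype.ext (congrArg Subtype.val U.map_zero_eq_one :))
  map_add_eq_mul' s t := Subtype.ext (Subtype.ext (congrArg Subtype.val (U.map_add_eq_mul s t) :))

variable [TopologicalSpace K] [CompactSpace K] [MeasurableSpace K] [BorelSpace K]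
  (μ : Measure K) [IsFiniteMeasure μ]

theorem integrable_smul_representation (hU : ∀ v, Continuous fun s => (U s : H →L[ℂ] H) v)
    (f : C(K, ℂ)) (v : H) : Integrable (fun s => f s • (U s : H →L[ℂ] H) v) μ :=
  (f.continuous.smul (hU v)).integrable_of_hasCompactSupport (.of_compactSpace _)

/-- The integrated form `f ↦ ∫ f(s) U_s ds` of a strongly continuous unitary representation `U`;
the integral is taken in the strong operator topology, that is, vector by vector. -/
noncomputable def integratedForm (hU : ∀ v, Continuous fun s => (U s : H →L[ℂ] H) v) :
    C(K, ℂ) →L[ℂ] H →L[ℂ] H :=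
  have hint := integrable_smul_representation μ hU
  LinearMap.mkContinuous₂
    (LinearMap.mk₂ ℂ (fun f v => ∫ s, f s • (U s : H →L[ℂ] H) v ∂μ)
      (fun f g v => by
        simpa only [ContinuousMap.add_apply, add_smul] using integral_add (hint f v) (hint g v))
      (fun c f v => by
        simpa only [ContinuousMap.smul_apply, smul_assoc] using integral_smul c _)
      (fun f v w => by
        simpa only [map_add, smul_add] using integral_add (hint f v) (hint f w))
      (fun c f v => by
        simpa only [map_smul, smul_comm _ c] using integral_smul c _))
    (μ.real Set.univ) fun f v => by
      refine (norm_integral_le_of_norm_le_const (C := ‖f‖ * ‖v‖) (.of_forall fun s => ?_)).trans_eq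
        (by ring)
      rw [norm_smul, Unitary.norm_map]
      gcongr
      exact f.norm_coe_le_norm s

variable (hU : ∀ v, Continuous fun s => (U s : H →L[ℂ] H) v)

theorem integratedForm_apply (f : C(K, ℂ)) (v : H) :
    integratedForm μ hU f v = ∫ s, f s • (U s : H →L[ℂ] H) v ∂μ := rfl

theorem integratedForm_mem_representationAlgebra (f : C(K, ℂ)) :
    integratedForm μ hU f ∈ representationAlgebra U := by
  refine mem_bicommutant.2 fun T hT => ContinuousLinearMap.ext fun v => ?_
  have hTU (s : K) : T ((U s : H →L[ℂ] H) v) = (U s : H →L[ℂ] H) (T v) :=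
    (DFunLike.congr_fun (((StarSubalgebra.mem_centralizer_iff ℂ).1 hT _ ⟨s, rfl⟩).1) v).symm
  calc T (integratedForm μ hU f v) = ∫ s, T (f s • (U s : H →L[ℂ] H) v) ∂μ :=
        (T.integral_comp_comm (integrable_smul_representation μ hU f v)).symm
    _ = integratedForm μ hU f (T v) := by simp only [map_smul, hTU, integratedForm_apply]

variable [ContinuousAdd K] [μ.IsAddLeftInvariant]

theorem mul_integratedForm_comp_addLeft (f : C(K, ℂ)) (a : K) :
    (U a : H →L[ℂ] H) * integratedForm μ hU (f.comp (.addLeft a)) = integratedForm μ hU f := by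
  ext v
  calc (U a : H →L[ℂ] H) (integratedForm μ hU (f.comp (.addLeft a)) v)
      = ∫ s, (U a : H →L[ℂ] H) (f (a + s) • (U s : H →L[ℂ] H) v) ∂μ :=
        ((U a : H →L[ℂ] H).integral_comp_comm (integrable_smul_representation μ hU _ v)).symm
    _ = ∫ s, f (a + s) • (U (a + s) : H →L[ℂ] H) v ∂μ := by
        simp only [map_smul, AddChar.map_add_eq_mul]
        rfl
    _ = integratedForm μ hU f v :=
        integral_add_left_eq_self (fun s => f s • (U s : H →L[ℂ] H) v) a

theorem exists_eigenfunctional_of_integratedForm_ne_zero {f : C(K, ℂ)}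
    (hf : integratedForm μ hU f ≠ 0) :
    ∃ (χ : AddChar K Circle) (Λ : C(K, ℂ) →L[ℂ] ℂ), Λ f ≠ 0 ∧
      ∀ a g, χ a * Λ (g.comp (.addLeft a)) = Λ g := by
  let I : C(K, ℂ) →L[ℂ] representationAlgebra U :=
    (integratedForm μ hU).codRestrict (representationAlgebra U).toSubalgebra.toSubmodule
      (integratedForm_mem_representationAlgebra μ hU)
  have hI (a : K) (g : C(K, ℂ)) : (unitaryInAlgebra U a : representationAlgebra U) *
      I (g.comp (.addLeft a)) = I g :=
    Subtype.ext (mul_integratedForm_comp_addLeft μ hU g a)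
  exact exists_eigenfunctional_of_mul_comm representationAlgebra_mul_comm (unitaryInAlgebra U) I
    (fun a g => g.comp (.addLeft a)) hI fun h => hf (Subtype.ext_iff.1 h)

end RepresentationAlgebra

/-! ### The regular representation of a compact abelian group -/

theorem continuous_comp_addLeft {G E : Type*} [Add G] [TopologicalSpace G] [ContinuousAdd G]
    [TopologicalSpace E] (f : C(G, E)) : Continuous fun s => f.comp (.addLeft s) :=
  ContinuousMap.continuous_of_continuous_uncurry _ <| by
    change Continuous fun p : G × G => f (p.1 + p.2)
    fun_prop

section RegularRepresentation

variable {K : Type*} [AddCommGroup K] [TopologicalSpace K] [IsTopologicalAddGroup K]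
  [MeasurableSpace K] [BorelSpace K] (μ : Measure K) [μ.IsAddLeftInvariant]

/-- The representation `(U_s v)(x) = v(s + x)` of an abelian group on its `L²` space. -/
noncomputable def regularRepresentation : AddChar K (unitary (Lp ℂ 2 μ →L[ℂ] Lp ℂ 2 μ)) :=
  Unitary.linearIsometryEquiv.symm.toMonoidHom.compAddChar
  { toFun s :=
    { toFun v := DomAddAct.mk s +ᵥ v
      invFun v := -DomAddAct.mk s +ᵥ v
      left_inv v := neg_vadd_vadd _ v
      right_inv v := vadd_neg_vadd _ v
      map_add' v w := DomAddAct.vadd_Lp_add _ v w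
      map_smul' c v := by rcases v with ⟨⟨_⟩, _⟩; rfl
      norm_map' v := DomAddAct.norm_vadd_Lp _ v }
    map_zero_eq_one' := LinearIsometryEquiv.ext (zero_vadd Kᵈᵃᵃ)
    map_add_eq_mul' s t := LinearIsometryEquiv.ext fun v => by
      change DomAddAct.mk (s + t) +ᵥ v = DomAddAct.mk s +ᵥ DomAddAct.mk t +ᵥ v
      rw [add_comm, DomAddAct.mk_add, add_vadd] }

theorem continuous_regularRepresentation [μ.InnerRegularCompactLTTop] [IsLocallyFiniteMeasure μ]
    (v : Lp ℂ 2 μ) :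
    Continuous fun s => (regularRepresentation μ s : Lp ℂ 2 μ →L[ℂ] Lp ℂ 2 μ) v := by
  have : Fact ((2 : ℝ≥0∞) ≠ ∞) := ⟨ENNReal.ofNat_ne_top⟩
  exact (DomAddAct.continuous_mk (M := K)).vadd continuous_const

variable [CompactSpace K] [IsFiniteMeasure μ]

theorem regularRepresentation_toLp (s : K) (g : C(K, ℂ)) :
    (regularRepresentation μ s : Lp ℂ 2 μ →L[ℂ] Lp ℂ 2 μ) (ContinuousMap.toLp 2 μ ℂ g) =
      ContinuousMap.toLp 2 μ ℂ (g.comp (.addLeft s)) := rfl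

theorem integratedForm_regularRepresentation_ne_zero [μ.InnerRegularCompactLTTop]
    [μ.IsOpenPosMeasure] {f : C(K, ℂ)} (hf : f ≠ 0) :
    integratedForm μ (continuous_regularRepresentation μ) f ≠ 0 := by
  intro h
  -- `J` represents the image of `star f` under the integrated form, and `J 0 = ∫ ‖f‖²`.
  let J : C(K, ℂ) := ∫ s, f s • (star f).comp (.addLeft s) ∂μ
  have hint : Integrable (fun s => f s • (star f).comp (.addLeft s)) μ :=
    (f.continuous.smul (continuous_comp_addLeft (star f))).integrable_of_hasCompactSupport
      (.of_compactSpace _)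
  have hJ : J = 0 := by
    refine ContinuousMap.toLp_injective (p := 2) (𝕜 := ℂ) μ ?_
    calc ContinuousMap.toLp 2 μ ℂ J
        = ∫ s, ContinuousMap.toLp 2 μ ℂ (f s • (star f).comp (.addLeft s)) ∂μ :=
          ((ContinuousMap.toLp 2 μ ℂ).integral_comp_comm hint).symm
      _ = integratedForm μ (continuous_regularRepresentation μ) f
            (ContinuousMap.toLp 2 μ ℂ (star f)) := by
          simp only [integratedForm_apply, regularRepresentation_toLp, map_smul]
          rfl
      _ = ContinuousMap.toLp 2 μ ℂ 0 := by rw [h, map_zero, zero_apply]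
  have hJ0 : J 0 = (∫ s, ‖f s‖ ^ 2 ∂μ : ℝ) := calc
    J 0 = ∫ s, (f s • (star f).comp (.addLeft s)) 0 ∂μ :=
      ((ContinuousMap.evalCLM ℂ (0 : K)).integral_comp_comm hint).symm
    _ = ∫ s, ((‖f s‖ ^ 2 : ℝ) : ℂ) ∂μ := by simp [Complex.mul_conj']
    _ = _ := integral_ofReal
  obtain ⟨x, hx⟩ := DFunLike.ne_iff.1 hf
  have hpos : 0 < ∫ s, ‖f s‖ ^ 2 ∂μ :=
    Continuous.integral_pos_of_hasCompactSupport_nonneg_nonzero (by fun_prop) (.of_compactSpace _)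
      (fun s => sq_nonneg ‖f s‖) (pow_ne_zero 2 (norm_ne_zero_iff.2 hx))
  exact hpos.ne (Complex.ofReal_injective (by simpa [hJ] using hJ0))

end RegularRepresentation

section CompactGroup

variable {K : Type*} [AddCommGroup K] [TopologicalSpace K] [IsTopologicalAddGroup K]
  [CompactSpace K]

theorem exists_continuous_addChar_eigenfunctional {f : C(K, ℂ)} (hf : f ≠ 0) :
    ∃ χ : AddChar K Circle, Continuous χ ∧ ∃ Λ : C(K, ℂ) →L[ℂ] ℂ, Λ f ≠ 0 ∧
      ∀ a g, χ a * Λ (g.comp (.addLeft a)) = Λ g := by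
  borelize K
  obtain ⟨χ, Λ, hΛf, hχΛ⟩ := exists_eigenfunctional_of_integratedForm_ne_zero _ _
    (integratedForm_regularRepresentation_ne_zero Measure.addHaar hf)
  refine ⟨χ, ?_, Λ, hΛf, hχΛ⟩
  have hΛ (a : K) : Λ (f.comp (.addLeft a)) ≠ 0 := fun h => hΛf <| by rw [← hχΛ a, h, mul_zero]
  have hχ : Continuous fun a => (χ a : ℂ) := by
    simp_rw [fun a => eq_div_of_mul_eq (hΛ a) (hχΛ a f)]
    exact continuous_const.div (Λ.continuous.comp (continuous_comp_addLeft f)) hΛ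
  exact continuous_induced_rng.2 hχ

theorem eigenfunctional_apply_eq_zero {χ : AddChar K Circle} {Λ : C(K, ℂ) →L[ℂ] ℂ}
    (hχΛ : ∀ a g, χ a * Λ (g.comp (.addLeft a)) = Λ g) {a : K} (ha : χ a = 1) {f : C(K, ℂ)}
    (hf : Tendsto (fun k : ℕ => (k : ℝ)⁻¹ • ∑ j ∈ Finset.range k, f.comp (.addLeft (j • a)))
      atTop (𝓝 0)) : Λ f = 0 := by
  have hterm (j : ℕ) : Λ (f.comp (.addLeft (j • a))) = Λ f := by
    simpa only [AddChar.map_nsmul_eq_pow, ha, one_pow, Circle.coe_one, one_mul]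
      using hχΛ (j • a) f
  have hmean : ∀ᶠ k : ℕ in atTop,
      Λ ((k : ℝ)⁻¹ • ∑ j ∈ Finset.range k, f.comp (.addLeft (j • a))) = Λ f := by
    filter_upwards [eventually_ne_atTop 0] with k hk
    simp [map_sum, hterm, hk]
  refine tendsto_nhds_unique (tendsto_const_nhds.congr' (EventuallyEq.symm hmean)) ?_
  simpa only [map_zero, Function.comp_def] using (Λ.continuous.tendsto 0).comp hf

theorem comp_eq_zero_of_addChar_cesaro {G : Type*} [AddCommGroup G] [TopologicalSpace G]
    {ι : G →+ K} (hι : Continuous ι) (hdense : DenseRange ι) {f : C(K, ℂ)}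
    (hcesaro : ∀ χ : AddChar G Circle, Continuous χ → ∃ a, χ a = 1 ∧
      TendstoUniformly
        (fun (k : ℕ) t => (k : ℝ)⁻¹ • ∑ j ∈ Finset.range k, f (ι (t + j • a))) 0 atTop) :
    f ∘ ι = 0 := by
  by_contra hfι
  have hf : f ≠ 0 := by rintro rfl; exact hfι rfl
  obtain ⟨χ, hχ, Λ, hΛf, hχΛ⟩ := exists_continuous_addChar_eigenfunctional hf
  obtain ⟨a, ha, hmean⟩ := hcesaro (χ.compAddMonoidHom ι) (hχ.comp hι)
  refine hΛf (eigenfunctional_apply_eq_zero hχΛ (a := ι a) ha ?_)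
  rw [ContinuousMap.tendsto_iff_tendstoUniformly]
  rw [Metric.tendstoUniformly_iff] at hmean ⊢
  intro ε hε
  filter_upwards [hmean (ε / 2) (half_pos hε)] with k hk x
  refine (hdense.induction_on (p := fun x => dist _ _ ≤ ε / 2) x ?_ fun t => ?_).trans_lt
    (half_lt_self hε)
  · exact isClosed_le (by fun_prop) continuous_const
  · simpa [add_comm] using (hk t).le

end CompactGroup

/-! ### The Bohr hull -/

/-- Bohr almost periodicity on a topological group: for every `ε` the `ε`-almost periods are
relatively dense, where a compact set `L` of corrections plays the role of the inclusion length. -/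
structure IsBohrAlmostPeriodic {G X : Type*} [AddGroup G] [TopologicalSpace G]
    [PseudoMetricSpace X] (F : G → X) : Prop where
  continuous : Continuous F
  exists_isCompact : ∀ ε > 0, ∃ L : Set G, IsCompact L ∧
    ∀ t, ∃ τ, t - τ ∈ L ∧ ∀ x, dist (F (x + τ)) (F x) ≤ ε

namespace IsBohrAlmostPeriodic

theorem of_norm_sub_le {V X : Type*} [NormedAddCommGroup V] [ProperSpace V]
    [SeminormedAddCommGroup X] {F : V → X} (hF : Continuous F)
    (h : ∀ ε > 0, ∃ l, ∀ t, ∃ τ, ‖τ - t‖ ≤ l ∧ ∀ x, ‖F (x + τ) - F x‖ ≤ ε) :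
    IsBohrAlmostPeriodic F where
  continuous := hF
  exists_isCompact ε hε := by
    obtain ⟨l, hl⟩ := h ε hε
    refine ⟨Metric.closedBall 0 l, isCompact_closedBall 0 l, fun t => ?_⟩
    simpa only [mem_closedBall_zero_iff, norm_sub_rev t, dist_eq_norm] using hl t

variable {G X Y : Type*} [AddCommGroup G] [TopologicalSpace G] [PseudoMetricSpace X]
  [PseudoMetricSpace Y] {F : G → X}

theorem comp_uniformContinuous {g : X → Y} (hg : UniformContinuous g)
    (hF : IsBohrAlmostPeriodic F) : IsBohrAlmostPeriodic (g ∘ F) where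
  continuous := hg.continuous.comp hF.continuous
  exists_isCompact ε hε := by
    obtain ⟨δ, hδ, hgδ⟩ := Metric.uniformContinuous_iff_le.1 hg ε hε
    obtain ⟨L, hL, hF⟩ := hF.exists_isCompact δ hδ
    refine ⟨L, hL, fun t => ?_⟩
    obtain ⟨τ, hτ, hFτ⟩ := hF t
    exact ⟨τ, hτ, fun x => hgδ (hFτ x)⟩

theorem isBounded_range (hF : IsBohrAlmostPeriodic F) : Bornology.IsBounded (Set.range F) := by
  obtain ⟨L, hL, hFL⟩ := hF.exists_isCompact 1 one_pos
  refine (hL.image hF.continuous).isBounded.cthickening (δ := 1) |>.subset ?_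
  rintro _ ⟨t, rfl⟩
  obtain ⟨τ, hτ, hFτ⟩ := hFL t
  refine Metric.mem_cthickening_of_dist_le _ _ _ _ ⟨_, hτ, rfl⟩ ?_
  simpa only [sub_add_cancel] using hFτ (t - τ)

theorem eventually_dist_le [IsTopologicalAddGroup G] (hF : IsBohrAlmostPeriodic F) {ε : ℝ}
    (hε : 0 < ε) : ∀ᶠ s in 𝓝 (0 : G), ∀ x, dist (F (s + x)) (F x) ≤ ε := by
  obtain ⟨L, hL, hFL⟩ := hF.exists_isCompact (ε / 3) (by positivity)
  have hlocal : ∀ᶠ s in 𝓝 (0 : G), ∀ l ∈ L, dist (F (s + l)) (F l) < ε / 3 := by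
    refine hL.eventually_forall_of_forall_eventually fun l _ => ?_
    have hcont : Continuous fun p : G × G => dist (F (p.1 + p.2)) (F p.2) := by
      have := hF.continuous
      fun_prop
    exact hcont.continuousAt.eventually_lt_const (by simpa using hε)
  filter_upwards [hlocal] with s hs x
  obtain ⟨τ, hτ, hFτ⟩ := hFL x
  have hsx : dist (F (s + x)) (F (s + (x - τ))) ≤ ε / 3 := by
    simpa only [add_assoc, sub_add_cancel] using hFτ (s + (x - τ))
  have hx : dist (F x) (F (x - τ)) ≤ ε / 3 := by simpa only [sub_add_cancel] using hFτ (x - τ)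
  linarith [dist_triangle4_right (F (s + x)) (F x) (F (s + (x - τ))) (F (x - τ)), hs _ hτ]

end IsBohrAlmostPeriodic

section Hull

variable {G X : Type*} [AddCommGroup G] [TopologicalSpace G] [IsTopologicalAddGroup G]
  [PseudoMetricSpace X]

/-- The seminorm `s ↦ sup_x dist (F (s + x)) (F x)`, for which the completion of `G` is the Bohr
hull of `F`. -/
noncomputable def translationSeminorm (F : G →ᵇ X) : AddGroupSeminorm G where
  toFun s := dist (F.compContinuous (.addLeft s)) F
  map_zero' := by
    have h : F.compContinuous (.addLeft 0) = F :=
      BoundedContinuousFunction.ext fun x => congrArg F (zero_add x)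
    rw [h, dist_self]
  neg' := by
    suffices h : ∀ s, dist (F.compContinuous (.addLeft (-s))) F ≤
        dist (F.compContinuous (.addLeft s)) F from
      fun s => (h s).antisymm (by simpa only [neg_neg] using h (-s))
    refine fun s => (BoundedContinuousFunction.dist_le dist_nonneg).2 fun x => ?_
    have h := (F.compContinuous (.addLeft s)).dist_coe_le_dist (g := F) (-s + x)
    simpa [dist_comm] using h
  add_le' s t := by
    refine (BoundedContinuousFunction.dist_le (by positivity)).2 fun x => ?_
    have hs := (F.compContinuous (.addLeft s)).dist_coe_le_dist (g := F) (t + x)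
    have ht := (F.compContinuous (.addLeft t)).dist_coe_le_dist (g := F) x
    simp only [BoundedContinuousFunction.compContinuous_apply, ContinuousMap.coe_addLeft,
      add_assoc] at hs ht ⊢
    exact (dist_triangle _ _ _).trans (add_le_add hs ht)

variable {F : G →ᵇ X}

theorem translationSeminorm_le {s : G} {ε : ℝ} (hε : 0 ≤ ε) :
    translationSeminorm F s ≤ ε ↔ ∀ x, dist (F (s + x)) (F x) ≤ ε :=
  BoundedContinuousFunction.dist_le hε

theorem dist_le_translationSeminorm (s x : G) :
    dist (F (s + x)) (F x) ≤ translationSeminorm F s :=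
  (F.compContinuous (.addLeft s)).dist_coe_le_dist (g := F) x

/-- The group `G` with the topology of `translationSeminorm F` in place of its own; a type synonym,
so that the two topologies do not clash. -/
def TranslationGroup (_F : G →ᵇ X) : Type _ := G

namespace TranslationGroup

noncomputable instance : SeminormedAddCommGroup (TranslationGroup F) :=
  (translationSeminorm F).toSeminormedAddCommGroup

variable (F) in
/-- The identity map from `G` to its synonym. -/
def of : G ≃+ TranslationGroup F := .refl G

theorem norm_of (s : G) : ‖of F s‖ = translationSeminorm F s := rfl

theorem continuous_of (hF : IsBohrAlmostPeriodic F) : Continuous (of F) := by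
  refine continuous_of_continuousAt_zero (of F) (Metric.tendsto_nhds.2 fun ε hε => ?_)
  filter_upwards [hF.eventually_dist_le (half_pos hε)] with s hs
  rw [map_zero, dist_zero_right, norm_of]
  exact ((translationSeminorm_le (half_pos hε).le).2 hs).trans_lt (half_lt_self hε)

theorem totallyBounded_univ (hF : IsBohrAlmostPeriodic F) :
    TotallyBounded (Set.univ : Set (TranslationGroup F)) := by
  refine Metric.totallyBounded_iff.2 fun ε hε => ?_
  obtain ⟨L, hL, hFL⟩ := hF.exists_isCompact (ε / 2) (half_pos hε)
  obtain ⟨N, hN, hLN⟩ := Metric.totallyBounded_iff.1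
    (hL.image (continuous_of hF)).totallyBounded (ε / 2) (half_pos hε)
  refine ⟨N, hN, fun t _ => ?_⟩
  obtain ⟨τ, hτ, hFτ⟩ := hFL ((of F).symm t)
  obtain ⟨y, hy, hyτ⟩ := Set.mem_iUnion₂.1 (hLN ⟨_, hτ, rfl⟩)
  have htτ : dist t (of F ((of F).symm t - τ)) ≤ ε / 2 := by
    rw [map_sub, AddEquiv.apply_symm_apply, dist_self_sub_right, norm_of]
    exact (translationSeminorm_le (half_pos hε).le).2 (by simpa only [add_comm τ] using hFτ)
  refine Set.mem_iUnion₂.2 ⟨y, hy, ?_⟩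
  rw [Metric.mem_ball] at hyτ ⊢
  linarith [dist_triangle t (of F ((of F).symm t - τ)) y]

theorem uniformContinuous :
    UniformContinuous fun s : TranslationGroup F => F ((of F).symm s) := by
  refine (LipschitzWith.mk_one fun s t => ?_).uniformContinuous
  have h := dist_le_translationSeminorm (F := F) ((of F).symm (s - t)) ((of F).symm t)
  rwa [← map_add, sub_add_cancel, ← norm_of, AddEquiv.apply_symm_apply, ← dist_eq_norm] at h

end TranslationGroup

end Hull

theorem compactSpace_completion {α : Type*} [UniformSpace α]
    (h : TotallyBounded (Set.univ : Set α)) : CompactSpace (UniformSpace.Completion α) := by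
  have himage := (h.image (UniformSpace.Completion.uniformContinuous_coe α)).closure
  rw [Set.image_univ, UniformSpace.Completion.denseRange_coe.closure_range] at himage
  exact ⟨himage.isCompact_of_isClosed isClosed_univ⟩

universe u in
theorem IsBohrAlmostPeriodic.exists_bohrHull {G : Type u} {X : Type*} [AddCommGroup G]
    [TopologicalSpace G] [IsTopologicalAddGroup G] [MetricSpace X] [CompleteSpace X] {F : G → X}
    (hF : IsBohrAlmostPeriodic F) :
    ∃ (K : Type u) (_ : AddCommGroup K) (_ : TopologicalSpace K) (_ : IsTopologicalAddGroup K)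
      (_ : CompactSpace K) (ι : G →+ K) (f : C(K, X)),
      Continuous ι ∧ DenseRange ι ∧ f ∘ ι = F := by
  obtain ⟨F, rfl⟩ : ∃ F' : G →ᵇ X, ⇑F' = F :=
    ⟨⟨⟨F, hF.continuous⟩, Metric.isBounded_range_iff.1 hF.isBounded_range⟩, rfl⟩
  let f : C(UniformSpace.Completion (TranslationGroup F), X) :=
    ⟨_, UniformSpace.Completion.continuous_extension
      (f := fun s => F ((TranslationGroup.of F).symm s))⟩
  have hcoe := UniformSpace.Completion.continuous_coe (TranslationGroup F)
  refine ⟨UniformSpace.Completion (TranslationGroup F), inferInstance, inferInstance,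
    inferInstance, compactSpace_completion (TranslationGroup.totallyBounded_univ hF),
    UniformSpace.Completion.toCompl.comp (TranslationGroup.of F : G →+ TranslationGroup F), f,
    hcoe.comp (TranslationGroup.continuous_of hF), ?_, funext fun t => ?_⟩
  · exact UniformSpace.Completion.denseRange_coe.comp
      (TranslationGroup.of F).surjective.denseRange hcoe
  · exact UniformSpace.Completion.extension_coe TranslationGroup.uniformContinuous _

theorem IsBohrAlmostPeriodic.eq_zero_of_addChar_cesaro {G X : Type*} [AddCommGroup G]
    [TopologicalSpace G] [IsTopologicalAddGroup G] [NormedAddCommGroup X] [NormedSpace ℝ X]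
    {F : G → X} (hF : IsBohrAlmostPeriodic F)
    (hcesaro : ∀ χ : AddChar G Circle, Continuous χ → ∃ a, χ a = 1 ∧
      TendstoUniformly
        (fun (k : ℕ) t => (k : ℝ)⁻¹ • ∑ j ∈ Finset.range k, F (t + j • a)) 0 atTop) :
    F = 0 := by
  refine funext fun t => SeparatingDual.eq_zero_of_forall_dual_eq_zero (R := ℝ) fun g => ?_
  let φ : X →L[ℝ] ℂ := Complex.ofRealCLM ∘L g
  obtain ⟨K, _, _, _, _, ι, f, hι, hdense, hf⟩ :=
    (hF.comp_uniformContinuous φ.uniformContinuous).exists_bohrHull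
  have hφF : φ ∘ F = 0 := by
    rw [← hf]
    refine comp_eq_zero_of_addChar_cesaro hι hdense fun χ hχ => ?_
    obtain ⟨a, ha, hmean⟩ := hcesaro χ hχ
    have hfφ (t : G) : f (ι t) = φ (F t) := congrFun hf t
    refine ⟨a, ha, ?_⟩
    simp only [hfφ]
    simpa [Function.comp_def, Pi.zero_def] using
      φ.uniformContinuous.comp_tendstoUniformly hmean
  exact Complex.ofReal_injective (congrFun hφF t)

/-! ### Characters of real vector spaces -/

theorem re_sq_eq_of_norm_eq_one {z : ℂ} (hz : ‖z‖ = 1) : (z ^ 2).re = 2 * z.re ^ 2 - 1 := by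
  have hz' : z.re * z.re + z.im * z.im = 1 := by
    rw [← Complex.normSq_apply, Complex.normSq_eq_norm_sq, hz, one_pow]
  rw [sq z, Complex.mul_re]
  linear_combination -hz'

theorem exists_re_pow_nonpos {z : ℂ} (hz : ‖z‖ = 1) (hz1 : z ≠ 1) :
    ∃ k : ℕ, (z ^ k).re ≤ 0 := by
  by_contra! hpos
  have hnorm (k : ℕ) : ‖z ^ k‖ = 1 := by rw [norm_pow, hz, one_pow]
  have hre_le (k : ℕ) : (z ^ k).re ≤ 1 := (Complex.re_le_norm _).trans_eq (hnorm k)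
  -- As long as `w = z ^ 2 ^ m` has `w.re > 0`, squaring it at least doubles `1 - w.re`.
  have hgrowth (m : ℕ) : 2 ^ m * (1 - z.re) ≤ 1 - (z ^ 2 ^ m).re := by
    induction m with
    | zero => simp
    | succ m ih =>
      calc 2 ^ (m + 1) * (1 - z.re) = 2 * (2 ^ m * (1 - z.re)) := by ring
        _ ≤ 2 * (1 - (z ^ 2 ^ m).re) := by gcongr
        _ ≤ 1 - (z ^ 2 ^ (m + 1)).re := by
          rw [pow_succ 2 m, pow_mul z, re_sq_eq_of_norm_eq_one (hnorm _)]
          nlinarith [hpos (2 ^ m), hre_le (2 ^ m)]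
  have hre : z.re < 1 := by
    refine (by simpa using hre_le 1 : z.re ≤ 1).lt_of_ne fun h => hz1 (Complex.ext h ?_)
    exact (Complex.le_def.1 (Complex.re_eq_norm.1 (h.trans hz.symm))).2.symm
  obtain ⟨m, hm⟩ := pow_unbounded_of_one_lt (1 - z.re)⁻¹ one_lt_two
  linarith [hgrowth m, hpos (2 ^ m), (inv_lt_iff_one_lt_mul₀ (sub_pos.2 hre)).1 hm]

theorem exists_ne_zero_addChar_real_eq_one {χ : AddChar ℝ Circle} (hχ : Continuous χ) :
    ∃ r ≠ 0, χ r = 1 := by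
  by_cases hone : χ 1 = 1
  · exact ⟨1, one_ne_zero, hone⟩
  obtain ⟨k, hk⟩ := exists_re_pow_nonpos (χ 1).norm_coe fun h => hone (Circle.ext h)
  rw [← Circle.coe_pow, ← AddChar.map_nsmul_eq_pow] at hk
  have hcont : Continuous fun s => (χ s : ℂ).re := by fun_prop
  obtain ⟨s, hs : (χ s : ℂ).re = 0⟩ := mem_range_of_exists_le_of_exists_ge hcont ⟨_, hk⟩
    ⟨0, by simp⟩
  have hs0 : s ≠ 0 := by
    rintro rfl
    simp at hs
  have hsq : (χ s : ℂ) ^ 2 = -1 := by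
    refine Complex.ext ?_ ?_
    · simp [re_sq_eq_of_norm_eq_one (χ s).norm_coe, hs]
    · simp [sq, hs]
  refine ⟨4 • s, smul_ne_zero four_ne_zero hs0, Circle.ext ?_⟩
  calc (χ (4 • s) : ℂ) = ((χ s : ℂ) ^ 2) ^ 2 := by
        rw [AddChar.map_nsmul_eq_pow, Circle.coe_pow, ← pow_mul]
    _ = 1 := by rw [hsq, neg_one_sq]

section RealVectorSpace

variable {V : Type*} [AddCommGroup V] [Module ℝ V] [TopologicalSpace V] [ContinuousSMul ℝ V]

theorem exists_ne_zero_addChar_smul_eq_one {χ : AddChar V Circle} (hχ : Continuous χ) (v : V) :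
    ∃ r : ℝ, r ≠ 0 ∧ χ (r • v) = 1 :=
  exists_ne_zero_addChar_real_eq_one
    (χ := χ.compAddMonoidHom (LinearMap.toSpanSingleton ℝ V v).toAddMonoidHom)
    (hχ.comp (continuous_id.smul continuous_const))

theorem besicovitch_stmt0_general [IsTopologicalAddGroup V] {X : Type*} [NormedAddCommGroup X]
    [NormedSpace ℝ X] {F : V → X} (hF : IsBohrAlmostPeriodic F) (v : V)
    (hcesaro : ∀ r : ℝ, r ≠ 0 → TendstoUniformly
      (fun (k : ℕ) t => (k : ℝ)⁻¹ • ∑ j ∈ Finset.range k, F (t + (j : ℝ) • r • v)) 0 atTop) :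
    F = 0 := by
  refine hF.eq_zero_of_addChar_cesaro fun χ hχ => ?_
  obtain ⟨r, hr, hχr⟩ := exists_ne_zero_addChar_smul_eq_one hχ v
  exact ⟨r • v, hχr, by simpa only [Nat.cast_smul_eq_nsmul] using hcesaro r hr⟩

end RealVectorSpace

theorem tendstoUniformly_zero_of_norm_le {α X : Type*} [SeminormedAddCommGroup X]
    {f : ℕ → α → X} (h : ∀ ε > 0, ∃ K, ∀ k, K ≤ k → ∀ t, ‖f k t‖ ≤ ε) :
    TendstoUniformly f 0 atTop := by
  refine Metric.tendstoUniformly_iff.2 fun ε hε => ?_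
  obtain ⟨K, hK⟩ := h (ε / 2) (half_pos hε)
  filter_upwards [eventually_ge_atTop K] with k hk t
  rw [Pi.zero_apply, dist_zero_left]
  exact (hK k hk t).trans_lt (half_lt_self hε)

/-- If `F : ℝⁿ → X` is Bohr almost periodic and, for every vector `a ∈ ℝⁿ`
all of whose coordinates are nonzero, the Cesàro means `(1/k)·Σ_{j<k} F(t + j•a)` converge
to `0` uniformly in `t` as `k → ∞`, then `F ≡ 0`. -/
theorem besicovitch_stmt0 {n : ℕ} {X : Type*}
    [NormedAddCommGroup X] [NormedSpace ℂ X] [CompleteSpace X]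
    (F : EuclideanSpace ℝ (Fin n) → X)
    (hFcont : Continuous F)
    (hFap : ∀ ε : ℝ, 0 < ε → ∃ l : ℝ, 0 < l ∧ ∀ t₀ : EuclideanSpace ℝ (Fin n),
      ∃ τ : EuclideanSpace ℝ (Fin n), ‖τ - t₀‖ ≤ l ∧
        ∀ t : EuclideanSpace ℝ (Fin n), ‖F (t + τ) - F t‖ ≤ ε)
    (hCesaro : ∀ a : EuclideanSpace ℝ (Fin n), (∀ i : Fin n, a i ≠ 0) →
      ∀ ε : ℝ, 0 < ε → ∃ K : ℕ, ∀ k : ℕ, K ≤ k →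
        ∀ t : EuclideanSpace ℝ (Fin n),
          ‖(k : ℝ)⁻¹ • ∑ j ∈ Finset.range k, F (t + (j : ℝ) • a)‖ ≤ ε) :
    ∀ t : EuclideanSpace ℝ (Fin n), F t = 0 :=
  congrFun <| besicovitch_stmt0_general
    (.of_norm_sub_le hFcont fun ε hε => (hFap ε hε).imp fun _ hl => hl.2) (WithLp.toLp 2 1)
    fun r hr => tendstoUniformly_zero_of_norm_le <| hCesaro _ fun i => by simpa using hr
end

section
/- Let (R(t))_{t>0} ⊆ L(X,Y) be a strongly continuous operator family satisfying ‖R(t)‖_{L(X,Y)} ≤ M·t^{β−1}/(1+t^γ) for all t > 0, with constants M > 0, β ∈ (0,1] and γ > 1. Let a > 0, α > 0, p ∈ [1,∞) with αp ≥ 1 and ap ≥ 1, and assume αp(β−1)/(αp−1) > −1 in case αp > 1, and β = 1 in case αp = 1. Let f : ℝ → X be Lebesgue measurable, Stepanov-(αp)-bounded (i.e. sup_{t∈ℝ} ∫_t^{t+1} ‖f(s)‖^{αp} ds < +∞), and belong to e-(x^α, t^{−a})-B^p(ℝ : X). Then the function F(t) := ∫_{−∞}^{t} R(t−s) f(s)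 ds is well-defined, bounded, continuous, and belongs to e-(x^α, t^{−a})-B^p(ℝ : Y). -/
open MeasureTheory Filter Topology ENNReal NNReal

noncomputable section

/-- A trigonometric polynomial `P : ℝ → X`: a finite sum `P(t) = Σ_j e^{iλ_j t} c_j`. -/
def IsTrigPoly1 {X : Type*} [NormedAddCommGroup X] [NormedSpace ℂ X] (P : ℝ → X) : Prop :=
  ∃ (m : ℕ) (lam : Fin m → ℝ) (c : Fin m → X),
    ∀ t : ℝ, P t = ∑ j, Complex.exp (Complex.I * ((lam j * t : ℝ) : ℂ)) • c j

/-- Membership in the class `e-(x^α, t^{−a})-B^p(ℝ : X)`. -/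
def MemBes1 {X : Type*} [NormedAddCommGroup X] [NormedSpace ℂ X]
    (α a p : ℝ) (g : ℝ → X) : Prop :=
  ∃ P : ℕ → ℝ → X, (∀ k, IsTrigPoly1 (P k)) ∧
    Tendsto (fun k => limsup (fun t : ℝ =>
      ENNReal.ofReal (t ^ (-a)) *
        (∫⁻ s in Set.Icc (-t) t, ENNReal.ofReal (‖g s - P k s‖ ^ (α * p))) ^ (1 / p))
      atTop) atTop (𝓝 (0 : ℝ≥0∞))

/-! The kernel bound and Hölder's inequality, with `q = αp` and the finite measure
`dμ(r) = (1 + |r|)^(-γ) dr`, give `‖F(t)‖ ≤ A ‖f(t - ·)‖_{L^q(μ)}`: the condition on `β` says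
exactly that `r^(β-1)` lies in the conjugate `L^{q'}` near `0`. Everything follows from this one
inequality. The Stepanov bound on `f` bounds its right-hand side uniformly in `t`. Translates of `μ`
are locally uniformly comparable to `μ`, so `F` is a locally uniform limit of the convolutions of
continuous compactly supported functions, hence continuous. Convolution maps trigonometric
polynomials to trigonometric polynomials, and for an approximant `P` of `f`, Fubini bounds
`∫_{-T}^T ∫ ‖(f - P)(t - r)‖^q dμ(r) dt` by `μ(ℝ) ∫_{-2T}^{2T} ‖f - P‖^q` plus `O(T)` times the
`μ`-tail of `‖f - P‖^q` outside `[-2T, 2T]`; since `ap ≥ 1`, the factor `T^(-ap)` kills the tail. -/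

section Kernel

variable {𝕜 Ω X Y : Type*} [MeasurableSpace Ω] [NontriviallyNormedField 𝕜]
  [NormedAddCommGroup X] [NormedSpace 𝕜 X] [NormedAddCommGroup Y] [NormedSpace 𝕜 Y]

lemma aestronglyMeasurable_apply_apply {R : Ω → X →L[𝕜] Y} {ν : Measure Ω}
    (hR : ∀ x, AEStronglyMeasurable (fun r => R r x) ν) {h : Ω → X}
    (hh : AEStronglyMeasurable h ν) : AEStronglyMeasurable (fun r => R r (h r)) ν := by
  have simple (g : SimpleFunc Ω X) : AEStronglyMeasurable (fun r => R r (g r)) ν := by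
    induction g using SimpleFunc.induction with
    | @const c s hs =>
      refine ((hR c).indicator hs).congr (Eventually.of_forall fun r => ?_)
      by_cases hr : r ∈ s <;> simp [hr]
    | @add f g _ hf hg => simpa using! hf.add hg
  suffices AEStronglyMeasurable (fun r => R r (hh.mk h r)) ν from
    this.congr (hh.ae_eq_mk.mono fun r hr => by simp only [hr])
  exact aestronglyMeasurable_of_tendsto_ae atTop
    (fun n => simple (hh.stronglyMeasurable_mk.approx n))
    (Eventually.of_forall fun r =>
      ((R r).continuous.tendsto _).comp (hh.stronglyMeasurable_mk.tendsto_approx r))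

/-- `R` is a kernel for which `h ↦ ∫ R r (h r) ∂ν` is absolutely convergent on `L^q(μ)`, with norm
at most `A`. The integrating measure `ν` and the controlling measure `μ` are kept apart, so that a
kernel on a half-line can be controlled by a measure on the whole line. -/
structure IsLpKernel (R : Ω → X →L[𝕜] Y) (ν μ : Measure Ω) (q : ℝ≥0∞) (A : ℝ≥0) : Prop where
  aestronglyMeasurable (x : X) : AEStronglyMeasurable (fun r => R r x) ν
  absolutelyContinuous : ν ≪ μ
  lintegral_enorm_le {h : Ω → X} (hh : AEStronglyMeasurable h μ) :
    ∫⁻ r, ‖R r (h r)‖ₑ ∂ν ≤ A * eLpNorm h q μ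

lemma exists_isLpKernel_of_norm_le_mul {R : Ω → X →L[𝕜] Y} {ν μ : Measure Ω} {p q : ℝ≥0∞}
    [p.HolderConjugate q] {κ w : Ω → ℝ} (hR : ∀ x, AEStronglyMeasurable (fun r => R r x) ν)
    (hw : Measurable w) (hw_pos : ∀ r, 0 < w r)
    (hνμ : ν.withDensity (fun r => ENNReal.ofReal (w r)) ≤ μ)
    (hκ : MemLp κ p (ν.withDensity fun r => ENNReal.ofReal (w r)))
    (hle : ∀ᵐ r ∂ν, ‖R r‖ ≤ κ r * w r) : ∃ A, IsLpKernel R ν μ q A := by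
  set νw := ν.withDensity fun r => ENNReal.ofReal (w r)
  refine ⟨(eLpNorm κ p νw).toNNReal, hR, ?_, fun {h} hh => ?_⟩
  · have hννw : ν ≪ νw := withDensity_absolutelyContinuous' hw.ennreal_ofReal.aemeasurable
      (Eventually.of_forall fun r => by simp [hw_pos r])
    exact hννw.trans (Measure.absolutelyContinuous_of_le hνμ)
  have hh_norm : AEStronglyMeasurable (fun r => ‖h r‖) νw := (hh.mono_measure hνμ).norm
  have hpointwise : ∀ᵐ r ∂ν,
      ‖R r (h r)‖ₑ ≤ ENNReal.ofReal (w r) * ‖(κ • fun r => ‖h r‖) r‖ₑ := by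
    filter_upwards [hle] with r hr
    have hκr : 0 ≤ κ r := nonneg_of_mul_nonneg_left ((norm_nonneg _).trans hr) (hw_pos r)
    rw [← ofReal_norm, ← ofReal_norm, ← ENNReal.ofReal_mul (hw_pos r).le]
    refine ENNReal.ofReal_le_ofReal ?_
    calc ‖R r (h r)‖ ≤ κ r * w r * ‖h r‖ := (R r).le_of_opNorm_le hr _
      _ = w r * ‖(κ • fun r => ‖h r‖) r‖ := by
        simp only [Pi.smul_apply', smul_eq_mul, norm_mul, norm_norm, Real.norm_of_nonneg hκr]
        ring
  rw [ENNReal.coe_toNNReal hκ.2.ne]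
  calc ∫⁻ r, ‖R r (h r)‖ₑ ∂ν
      ≤ ∫⁻ r, ENNReal.ofReal (w r) * ‖(κ • fun r => ‖h r‖) r‖ₑ ∂ν := lintegral_mono_ae hpointwise
    _ = eLpNorm (κ • fun r => ‖h r‖) 1 νw := by
      rw [eLpNorm_one_eq_lintegral_enorm]
      exact (lintegral_withDensity_eq_lintegral_mul_non_measurable ν hw.ennreal_ofReal
        (Eventually.of_forall fun _ => ENNReal.ofReal_lt_top) _).symm
    _ ≤ eLpNorm κ p νw * eLpNorm (fun r => ‖h r‖) q νw :=
      eLpNorm_smul_le_mul_eLpNorm hh_norm hκ.1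
    _ ≤ eLpNorm κ p νw * eLpNorm h q μ := by
      rw [eLpNorm_norm]
      gcongr

lemma eLpNorm_ofReal_rpow_eq_lintegral {E : Type*} [NormedAddCommGroup E]
    {μ : Measure Ω} {h : Ω → E} {q : ℝ} (hq : 0 < q) :
    eLpNorm h (ENNReal.ofReal q) μ ^ q = ∫⁻ r, ‖h r‖ₑ ^ q ∂μ := by
  lift q to ℝ≥0 using hq.le
  simpa using eLpNorm_nnreal_pow_eq_lintegral (f := h) (μ := μ) (NNReal.coe_pos.1 hq).ne'

namespace IsLpKernel

variable {R : Ω → X →L[𝕜] Y} {ν μ : Measure Ω} {q : ℝ≥0∞} {A : ℝ≥0} {h g : Ω → X}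

lemma integrable (hR : IsLpKernel R ν μ q A) (hh : MemLp h q μ) :
    Integrable (fun r => R r (h r)) ν :=
  ⟨aestronglyMeasurable_apply_apply hR.aestronglyMeasurable
      (hh.1.mono_ac hR.absolutelyContinuous),
    (hR.lintegral_enorm_le hh.1).trans_lt (ENNReal.mul_lt_top ENNReal.coe_lt_top hh.2)⟩

variable [NormedSpace ℝ Y]

lemma enorm_integral_le (hR : IsLpKernel R ν μ q A) (hh : AEStronglyMeasurable h μ) :
    ‖∫ r, R r (h r) ∂ν‖ₑ ≤ A * eLpNorm h q μ :=
  (enorm_integral_le_lintegral_enorm _).trans (hR.lintegral_enorm_le hh)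

lemma enorm_integral_sub_integral_le (hR : IsLpKernel R ν μ q A) (hh : MemLp h q μ)
    (hg : MemLp g q μ) :
    ‖(∫ r, R r (h r) ∂ν) - ∫ r, R r (g r) ∂ν‖ₑ ≤ A * eLpNorm (fun r => h r - g r) q μ := by
  rw [← integral_sub (hR.integrable hh) (hR.integrable hg)]
  simp_rw [← map_sub]
  exact hR.enorm_integral_le (hh.1.sub hg.1)

lemma enorm_integral_sub_integral_rpow_le {q : ℝ} (hq : 0 < q)
    (hR : IsLpKernel R ν μ (ENNReal.ofReal q) A) (hh : MemLp h (ENNReal.ofReal q) μ)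
    (hg : MemLp g (ENNReal.ofReal q) μ) :
    ‖(∫ r, R r (h r) ∂ν) - ∫ r, R r (g r) ∂ν‖ₑ ^ q ≤ A ^ q * ∫⁻ r, ‖h r - g r‖ₑ ^ q ∂μ := by
  rw [← eLpNorm_ofReal_rpow_eq_lintegral hq, ← ENNReal.mul_rpow_of_nonneg _ _ hq.le]
  gcongr
  exact hR.enorm_integral_sub_integral_le hh hg

end IsLpKernel

end Kernel

section DecayMeasure

/-- The finite measure `(1 + |r|)^(-γ) dr` on the line. It replaces the decay of the kernel at
infinity, and a translate of it is comparable to itself. -/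
def decayMeasure (γ : ℝ) : Measure ℝ :=
  volume.withDensity fun r => ENNReal.ofReal ((1 + |r|) ^ (-γ))

variable {γ : ℝ}

lemma decayMeasure_le_volume (hγ : 0 ≤ γ) : decayMeasure γ ≤ volume := by
  conv_rhs => rw [← withDensity_one (μ := volume)]
  refine withDensity_mono (Eventually.of_forall fun r => ENNReal.ofReal_le_one.2 ?_)
  exact Real.rpow_le_one_of_one_le_of_nonpos (by simp) (by linarith)

lemma volume_absolutelyContinuous_decayMeasure : volume ≪ decayMeasure γ :=
  withDensity_absolutelyContinuous' (by fun_prop) <| Eventually.of_forall fun r => by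
    simpa using Real.rpow_pos_of_pos (by positivity : 0 < 1 + |r|) (-γ)

lemma decayMeasure_absolutelyContinuous_volume : decayMeasure γ ≪ volume :=
  withDensity_absolutelyContinuous _ _

lemma isFiniteMeasure_decayMeasure (hγ : 1 < γ) : IsFiniteMeasure (decayMeasure γ) := by
  have hint : Integrable fun r : ℝ => (1 + ‖r‖) ^ (-γ) :=
    integrable_one_add_norm (by simpa using hγ)
  exact isFiniteMeasure_withDensity hint.lintegral_lt_top.ne

lemma lintegral_decayMeasure {g : ℝ → ℝ≥0∞} (hg : AEMeasurable g) :
    ∫⁻ r, g r ∂decayMeasure γ = ∫⁻ r, ENNReal.ofReal ((1 + |r|) ^ (-γ)) * g r :=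
  lintegral_withDensity_eq_lintegral_mul₀ (by fun_prop) hg

lemma lintegral_comp_sub_left_decayMeasure {g : ℝ → ℝ≥0∞} (hg : AEMeasurable g) (t : ℝ) :
    ∫⁻ r, g (t - r) ∂decayMeasure γ = ∫⁻ s, ENNReal.ofReal ((1 + |t - s|) ^ (-γ)) * g s := by
  have hgt : AEMeasurable fun r => g (t - r) :=
    hg.comp_quasiMeasurePreserving
      (Measure.measurePreserving_sub_left volume t).quasiMeasurePreserving
  rw [lintegral_decayMeasure hgt,
    ← lintegral_sub_left_eq_self (fun r => ENNReal.ofReal ((1 + |r|) ^ (-γ)) * g (t - r)) t]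
  simp only [_root_.sub_sub_cancel]

lemma ofReal_one_add_abs_rpow_neg_le (hγ : 0 ≤ γ) {c u v : ℝ} (hc : 0 < c)
    (h : 1 + |v| ≤ c * (1 + |u|)) :
    ENNReal.ofReal ((1 + |u|) ^ (-γ)) ≤
      ENNReal.ofReal (c ^ γ) * ENNReal.ofReal ((1 + |v|) ^ (-γ)) := by
  rw [← ENNReal.ofReal_mul (by positivity)]
  refine ENNReal.ofReal_le_ofReal ?_
  calc (1 + |u|) ^ (-γ) ≤ (c⁻¹ * (1 + |v|)) ^ (-γ) :=
        Real.rpow_le_rpow_of_nonpos (by positivity) ((inv_mul_le_iff₀ hc).2 h) (by linarith)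
    _ = c ^ γ * (1 + |v|) ^ (-γ) := by
      rw [Real.mul_rpow (by positivity) (by positivity), Real.inv_rpow hc.le, Real.rpow_neg hc.le,
        inv_inv]

lemma map_sub_left_decayMeasure_le (hγ : 0 ≤ γ) (t : ℝ) :
    (decayMeasure γ).map (fun r => t - r) ≤
      ENNReal.ofReal ((1 + |t|) ^ γ) • decayMeasure γ := by
  refine Measure.le_intro fun s hs _ => ?_
  have hind : Measurable (s.indicator (1 : ℝ → ℝ≥0∞)) := measurable_one.indicator hs
  have habs (r : ℝ) : 1 + |r| ≤ (1 + |t|) * (1 + |t - r|) := by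
    have : |r| ≤ |t| + |t - r| := by simpa using abs_sub t (t - r)
    nlinarith [abs_nonneg t, abs_nonneg (t - r)]
  rw [← lintegral_indicator_one hs, lintegral_map hind (by fun_prop), Measure.smul_apply,
    ← lintegral_indicator_one hs, smul_eq_mul, lintegral_decayMeasure hind.aemeasurable,
    lintegral_comp_sub_left_decayMeasure hind.aemeasurable, ← lintegral_const_mul _ (by fun_prop)]
  refine lintegral_mono fun r => ?_
  rw [← mul_assoc]
  gcongr
  exact ofReal_one_add_abs_rpow_neg_le hγ (by positivity) (habs r)

section Translation

variable {E : Type*} [NormedAddCommGroup E] {q : ℝ≥0∞} {h : ℝ → E}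

lemma memLp_comp_sub_left_decayMeasure (hγ : 0 ≤ γ) (hh : MemLp h q (decayMeasure γ)) (t : ℝ) :
    MemLp (fun r => h (t - r)) q (decayMeasure γ) :=
  (hh.of_measure_le_smul ENNReal.ofReal_ne_top (map_sub_left_decayMeasure_le hγ t)).comp_of_map
    (by fun_prop)

lemma eLpNorm_comp_sub_left_decayMeasure_le (hγ : 0 ≤ γ) (hq : q ≠ ⊤)
    (hh : AEStronglyMeasurable h (decayMeasure γ)) (t : ℝ) :
    eLpNorm (fun r => h (t - r)) q (decayMeasure γ) ≤
      ENNReal.ofReal ((1 + |t|) ^ γ) ^ (1 / q).toReal * eLpNorm h q (decayMeasure γ) := by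
  have hmap := map_sub_left_decayMeasure_le hγ t
  have hh' : AEStronglyMeasurable h ((decayMeasure γ).map fun r => t - r) :=
    hh.mono_ac ((Measure.absolutelyContinuous_of_le hmap).trans
      Measure.smul_absolutelyContinuous)
  calc eLpNorm (fun r => h (t - r)) q (decayMeasure γ)
      = eLpNorm h q ((decayMeasure γ).map fun r => t - r) :=
        (eLpNorm_map_measure hh' (by fun_prop)).symm
    _ ≤ eLpNorm h q (ENNReal.ofReal ((1 + |t|) ^ γ) • decayMeasure γ) :=
        eLpNorm_mono_measure _ hmap
    _ = _ := by rw [eLpNorm_smul_measure_of_ne_top hq, smul_eq_mul]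

end Translation

lemma lintegral_setLIntegral_Icc_add_one {g : ℝ → ℝ≥0∞} (hg : AEMeasurable g) :
    ∫⁻ u, ∫⁻ s in Set.Icc u (u + 1), g s = ∫⁻ s, g s := by
  have hmeas : MeasurableSet {x : ℝ × ℝ | x.2 ∈ Set.Icc x.1 (x.1 + 1)} :=
    (measurableSet_le measurable_fst measurable_snd).inter
      (measurableSet_le measurable_snd (by fun_prop))
  have hswap (u s : ℝ) : (Set.Icc u (u + 1)).indicator g s =
      (Set.Icc (s - 1) s).indicator (fun _ => g s) u := by
    simp only [Set.indicator, Set.mem_Icc, sub_le_iff_le_add, and_comm]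
  calc ∫⁻ u, ∫⁻ s in Set.Icc u (u + 1), g s
      = ∫⁻ u, ∫⁻ s, (Set.Icc u (u + 1)).indicator g s := by
        simp_rw [lintegral_indicator measurableSet_Icc]
    _ = ∫⁻ s, ∫⁻ u, (Set.Icc u (u + 1)).indicator g s :=
        lintegral_lintegral_swap (hg.comp_snd.indicator hmeas)
    _ = ∫⁻ s, g s := by
        simp_rw [hswap, lintegral_indicator_const measurableSet_Icc, Real.volume_Icc]
        simp

lemma lintegral_comp_sub_left_decayMeasure_le_of_stepanov (hγ : 0 ≤ γ) {g : ℝ → ℝ≥0∞}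
    (hg : AEMeasurable g) {C : ℝ≥0∞} (hC : ∀ t, ∫⁻ s in Set.Icc t (t + 1), g s ≤ C) (t : ℝ) :
    ∫⁻ r, g (t - r) ∂decayMeasure γ ≤
      ENNReal.ofReal (2 ^ γ) * C * decayMeasure γ Set.univ := by
  let w (r : ℝ) : ℝ≥0∞ := ENNReal.ofReal ((1 + |r|) ^ (-γ))
  have hw : Measurable w := by fun_prop
  have hcompare (u s : ℝ) (hs : s ∈ Set.Icc u (u + 1)) :
      w (t - s) ≤ ENNReal.ofReal (2 ^ γ) * w (t - u) := by
    refine ofReal_one_add_abs_rpow_neg_le hγ two_pos ?_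
    have h1 : |t - u| ≤ |t - s| + |s - u| := abs_sub_le _ _ _
    have h2 : |s - u| ≤ 1 := abs_le.2 ⟨by linarith [hs.1], by linarith [hs.2]⟩
    linarith [abs_nonneg (t - s)]
  calc ∫⁻ r, g (t - r) ∂decayMeasure γ
      = ∫⁻ u, ∫⁻ s in Set.Icc u (u + 1), w (t - s) * g s := by
        rw [lintegral_comp_sub_left_decayMeasure hg, lintegral_setLIntegral_Icc_add_one]
        fun_prop
    _ ≤ ∫⁻ u, ∫⁻ s in Set.Icc u (u + 1), ENNReal.ofReal (2 ^ γ) * w (t - u) * g s :=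
        lintegral_mono fun u => setLIntegral_mono' measurableSet_Icc fun s hs => by
          gcongr
          exact hcompare u s hs
    _ ≤ ∫⁻ u, ENNReal.ofReal (2 ^ γ) * w (t - u) * C :=
        lintegral_mono fun u => by
          rw [lintegral_const_mul'' _ hg.restrict]
          gcongr
          exact hC u
    _ = ENNReal.ofReal (2 ^ γ) * C * decayMeasure γ Set.univ := by
        have huniv := lintegral_comp_sub_left_decayMeasure (γ := γ) (g := 1) aemeasurable_const t
        simp only [Pi.one_apply, mul_one, lintegral_one] at huniv
        rw [lintegral_mul_const _ (by fun_prop), lintegral_const_mul _ (by fun_prop), huniv]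
        ring

end DecayMeasure

section PowerKernel

lemma integrableOn_rpow_decayMeasure {γ s : ℝ} (hγ : 1 < γ) (hs : -1 < s) (hs0 : s ≤ 0) :
    IntegrableOn (fun r : ℝ => r ^ s) (Set.Ioi 0) (decayMeasure γ) := by
  have := isFiniteMeasure_decayMeasure hγ
  rw [← Set.Ioc_union_Ioi_eq_Ioi zero_le_one]
  refine .union ?_ ?_
  · have hvol : IntegrableOn (fun r : ℝ => r ^ s) (Set.Ioc 0 1) :=
      (intervalIntegrable_iff_integrableOn_Ioc_of_le zero_le_one).1
        (intervalIntegral.intervalIntegrable_rpow' hs)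
    exact hvol.mono_measure (decayMeasure_le_volume (by linarith))
  · refine .of_bound (measure_lt_top _ _) (by fun_prop) 1 ?_
    filter_upwards [ae_restrict_mem measurableSet_Ioi] with r hr
    have hr1 : (1 : ℝ) < r := hr
    rw [Real.norm_of_nonneg (Real.rpow_nonneg (by linarith) _)]
    exact Real.rpow_le_one_of_one_le_of_nonpos hr1.le hs0

lemma memLp_rpow_decayMeasure {γ s q : ℝ} (hγ : 1 < γ) (hq : 0 < q) (hs : -1 < q * s)
    (hs0 : s ≤ 0) :
    MemLp (fun r : ℝ => r ^ s) (ENNReal.ofReal q) ((decayMeasure γ).restrict (Set.Ioi 0)) := by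
  rw [← integrable_norm_rpow_iff (by fun_prop) (by simpa using hq) ENNReal.ofReal_ne_top,
    ENNReal.toReal_ofReal hq.le]
  refine (integrableOn_rpow_decayMeasure hγ hs (mul_nonpos_of_nonneg_of_nonpos hq.le hs0)).congr ?_
  filter_upwards [ae_restrict_mem measurableSet_Ioi] with r (hr : 0 < r)
  rw [Real.norm_of_nonneg (Real.rpow_nonneg hr.le _), ← Real.rpow_mul hr.le, mul_comm]

lemma exists_holderConjugate_memLp_rpow_decayMeasure {γ s q : ℝ} (hγ : 1 < γ) (hq : 1 ≤ q)
    (hs0 : s ≤ 0) (hs : 1 < q → -1 < q * s / (q - 1)) (hs1 : q = 1 → s = 0) :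
    ∃ p : ℝ≥0∞, p.HolderConjugate (ENNReal.ofReal q) ∧
      MemLp (fun r : ℝ => r ^ s) p ((decayMeasure γ).restrict (Set.Ioi 0)) := by
  have := isFiniteMeasure_decayMeasure hγ
  obtain rfl | hq1 := hq.eq_or_lt
  · refine ⟨∞, by rw [ENNReal.ofReal_one]; infer_instance, ?_⟩
    simpa only [hs1 rfl, Real.rpow_zero] using memLp_const (1 : ℝ)
  · have hconj := Real.HolderConjugate.conjExponent hq1
    refine ⟨_, hconj.symm.ennrealOfReal, memLp_rpow_decayMeasure hγ hconj.symm.pos ?_ hs0⟩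
    simpa only [Real.conjExponent, div_mul_eq_mul_div] using hs hq1

lemma div_one_add_rpow_le {γ r : ℝ} (hγ : 1 ≤ γ) (hr : 0 ≤ r) {c : ℝ} (hc : 0 ≤ c) :
    c / (1 + r ^ γ) ≤ 2 ^ (γ - 1) * c * (1 + |r|) ^ (-γ) := by
  have hconvex : (1 + r) ^ γ ≤ 2 ^ (γ - 1) * (1 + r ^ γ) := by
    lift r to ℝ≥0 using hr
    simpa using! NNReal.coe_le_coe.2 (NNReal.rpow_add_le_mul_rpow_add_rpow 1 r hγ)
  rw [abs_of_nonneg hr, Real.rpow_neg (by positivity), ← div_eq_mul_inv,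
    div_le_div_iff₀ (by positivity) (by positivity)]
  nlinarith

lemma exists_isLpKernel_of_norm_le {𝕜 X Y : Type*} [NontriviallyNormedField 𝕜]
    [NormedAddCommGroup X] [NormedSpace 𝕜 X] [NormedAddCommGroup Y] [NormedSpace 𝕜 Y]
    {R : ℝ → X →L[𝕜] Y}
    (hRmeas : ∀ x, AEStronglyMeasurable (fun t => R t x) (volume.restrict (Set.Ioi 0)))
    {M β γ q : ℝ} (hβ : β ≤ 1) (hγ : 1 < γ)
    (hR : ∀ t, 0 < t → ‖R t‖ ≤ M * t ^ (β - 1) / (1 + t ^ γ)) (hq : 1 ≤ q)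
    (hcase1 : 1 < q → -1 < q * (β - 1) / (q - 1)) (hcase2 : q = 1 → β = 1) :
    ∃ A, IsLpKernel R (volume.restrict (Set.Ioi 0)) (decayMeasure γ) (ENNReal.ofReal q) A := by
  have hM : 0 ≤ M := by
    have hR1 : 0 ≤ M * 1 ^ (β - 1) / (1 + 1 ^ γ) := (norm_nonneg _).trans (hR 1 one_pos)
    simp only [Real.one_rpow] at hR1
    linarith
  obtain ⟨p, hpq, hκ⟩ := exists_holderConjugate_memLp_rpow_decayMeasure hγ hq
    (sub_nonpos.2 hβ) hcase1 fun h => sub_eq_zero.2 (hcase2 h)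
  have hdensity : (volume.restrict (Set.Ioi 0)).withDensity
      (fun r : ℝ => ENNReal.ofReal ((1 + |r|) ^ (-γ))) = (decayMeasure γ).restrict (Set.Ioi 0) :=
    (restrict_withDensity measurableSet_Ioi _).symm
  refine exists_isLpKernel_of_norm_le_mul (p := p) (κ := fun r => 2 ^ (γ - 1) * (M * r ^ (β - 1)))
    hRmeas (by fun_prop) (fun r => by positivity) (hdensity ▸ Measure.restrict_le_self)
    (hdensity ▸ (hκ.const_mul M).const_mul _) ?_
  filter_upwards [ae_restrict_mem measurableSet_Ioi] with r (hr : 0 < r)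
  exact (hR r hr).trans (div_one_add_rpow_le hγ.le hr.le (by positivity))

end PowerKernel

section Convolution

namespace IsLpKernel

variable {𝕜 X Y : Type*} [NontriviallyNormedField 𝕜]
  [NormedAddCommGroup X] [NormedSpace 𝕜 X] [NormedAddCommGroup Y] [NormedSpace 𝕜 Y]
  [NormedSpace ℝ Y] {R : ℝ → X →L[𝕜] Y} {ν μ : Measure ℝ} {q : ℝ≥0∞} {A : ℝ≥0}

lemma continuous_integral_of_hasCompactSupport [IsFiniteMeasure μ]
    (hR : IsLpKernel R ν μ q A) {g : ℝ → X} (hg : Continuous g) (hgs : HasCompactSupport g) :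
    Continuous fun t => ∫ r, R r (g (t - r)) ∂ν := by
  obtain ⟨B, hB⟩ := hgs.exists_bound_of_continuous hg
  have hmem (t : ℝ) : MemLp (fun r => g (t - r)) q μ :=
    .of_bound (Continuous.aestronglyMeasurable (by fun_prop)) B (Eventually.of_forall fun r => hB _)
  have hK : A * μ Set.univ ^ q.toReal⁻¹ ≠ ∞ :=
    ENNReal.mul_ne_top ENNReal.coe_ne_top
      (ENNReal.rpow_ne_top_of_nonneg (by positivity) (measure_ne_top μ _))
  refine continuous_iff_continuousAt.2 fun x => EMetric.tendsto_nhds.2 fun ε hε => ?_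
  obtain ⟨δ, hδ, hδε⟩ := ENNReal.exists_nnreal_pos_mul_lt hK hε.ne'
  obtain ⟨η, hη, hgη⟩ :=
    Metric.uniformContinuous_iff.1 (hgs.uniformContinuous_of_continuous hg) δ hδ
  filter_upwards [Metric.ball_mem_nhds x hη] with y hy
  have hclose (r : ℝ) : ‖g (y - r) - g (x - r)‖ ≤ δ := by
    rw [← dist_eq_norm]
    exact (hgη (by simpa using hy)).le
  rw [edist_eq_enorm_sub]
  calc ‖(∫ r, R r (g (y - r)) ∂ν) - ∫ r, R r (g (x - r)) ∂ν‖ₑ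
      ≤ A * eLpNorm (fun r => g (y - r) - g (x - r)) q μ :=
        hR.enorm_integral_sub_integral_le (hmem y) (hmem x)
    _ ≤ A * (μ Set.univ ^ q.toReal⁻¹ * ENNReal.ofReal δ) := by
        gcongr
        exact eLpNorm_le_of_ae_bound (Eventually.of_forall hclose)
    _ = δ * (A * μ Set.univ ^ q.toReal⁻¹) := by
        rw [ENNReal.ofReal_coe_nnreal]
        ring
    _ < ε := hδε

lemma continuous_integral [NormedSpace ℝ X] {γ : ℝ} (hγ : 1 < γ) (hq : q ≠ ∞)
    (hR : IsLpKernel R ν (decayMeasure γ) q A) {f : ℝ → X} (hf : MemLp f q (decayMeasure γ)) :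
    Continuous fun t => ∫ r, R r (f (t - r)) ∂ν := by
  have hγ0 : 0 ≤ γ := by linarith
  have := isFiniteMeasure_decayMeasure hγ
  refine continuous_of_locally_uniform_approx_of_continuousAt fun x u hu => ?_
  obtain ⟨ε, hε, hεu⟩ := mem_uniformity_edist.1 hu
  let D : ℝ≥0∞ := A * ENNReal.ofReal ((1 + (|x| + 1)) ^ γ) ^ (1 / q).toReal
  have hD : D ≠ ∞ := ENNReal.mul_ne_top ENNReal.coe_ne_top
    (ENNReal.rpow_ne_top_of_nonneg ENNReal.toReal_nonneg ENNReal.ofReal_ne_top)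
  obtain ⟨δ, hδ, hδε⟩ := ENNReal.exists_nnreal_pos_mul_lt hD hε.ne'
  obtain ⟨g, hgs, hfg, hgc, hg⟩ := hf.exists_hasCompactSupport_eLpNorm_sub_le hq
    (ENNReal.coe_ne_zero.2 hδ.ne')
  refine ⟨Metric.ball x 1, Metric.ball_mem_nhds x one_pos, fun t => ∫ r, R r (g (t - r)) ∂ν,
    (hR.continuous_integral_of_hasCompactSupport hgc hgs).continuousAt, fun y hy => hεu ?_⟩
  have hy' : |y| ≤ |x| + 1 := by
    have h1 : |y - x| < 1 := by simpa [Real.dist_eq] using hy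
    linarith [abs_sub_abs_le_abs_sub y x]
  rw [edist_eq_enorm_sub]
  calc ‖(∫ r, R r (f (y - r)) ∂ν) - ∫ r, R r (g (y - r)) ∂ν‖ₑ
      ≤ A * eLpNorm (fun r => (f - g) (y - r)) q (decayMeasure γ) :=
        hR.enorm_integral_sub_integral_le (memLp_comp_sub_left_decayMeasure hγ0 hf y)
          (memLp_comp_sub_left_decayMeasure hγ0 hg y)
    _ ≤ A * (ENNReal.ofReal ((1 + |y|) ^ γ) ^ (1 / q).toReal * δ) := by
        grw [eLpNorm_comp_sub_left_decayMeasure_le hγ0 hq (hf.sub hg).1, hfg]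
    _ ≤ A * (ENNReal.ofReal ((1 + (|x| + 1)) ^ γ) ^ (1 / q).toReal * δ) := by gcongr
    _ = δ * D := by ring
    _ < ε := hδε

end IsLpKernel

variable {E : Type*} [NormedAddCommGroup E]

lemma preimage_sub_left_Ioi_zero (t : ℝ) : (fun s => t - s) ⁻¹' Set.Ioi 0 = Set.Iio t := by
  ext s
  simp

lemma integrableOn_Iio_comp_sub_left_iff {φ : ℝ → E} {t : ℝ} :
    IntegrableOn (fun s => φ (t - s)) (Set.Iio t) ↔ IntegrableOn φ (Set.Ioi 0) := by
  rw [← preimage_sub_left_Ioi_zero]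
  exact (Measure.measurePreserving_sub_left volume t).integrableOn_comp_preimage
    (Homeomorph.subLeft t).measurableEmbedding

lemma setIntegral_Iio_comp_sub_left [NormedSpace ℝ E] (φ : ℝ → E) (t : ℝ) :
    ∫ s in Set.Iio t, φ (t - s) = ∫ r in Set.Ioi 0, φ r := by
  rw [← preimage_sub_left_Ioi_zero]
  exact (Measure.measurePreserving_sub_left volume t).setIntegral_preimage_emb
    (Homeomorph.subLeft t).measurableEmbedding φ _

end Convolution

section TrigonometricPolynomial

variable {X Y : Type*} [NormedAddCommGroup X] [NormedSpace ℂ X]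
  [NormedAddCommGroup Y] [NormedSpace ℂ Y]

lemma isTrigPoly1_exp_smul (lam : ℝ) (c : X) :
    IsTrigPoly1 fun t : ℝ => Complex.exp (Complex.I * ((lam * t : ℝ) : ℂ)) • c :=
  ⟨1, fun _ => lam, fun _ => c, fun t => by simp⟩

namespace IsTrigPoly1

lemma memLp {P : ℝ → X} (hP : IsTrigPoly1 P) {q : ℝ≥0∞} {μ : Measure ℝ} [IsFiniteMeasure μ] :
    MemLp P q μ := by
  obtain ⟨m, lam, c, hPsum⟩ := hP
  rw [funext hPsum]
  refine memLp_finsetSum _ fun j _ => ?_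
  refine .of_bound (Continuous.aestronglyMeasurable (by fun_prop)) ‖c j‖
    (Eventually.of_forall fun t => ?_)
  rw [norm_smul, mul_comm Complex.I, Complex.norm_exp_ofReal_mul_I, one_mul]

lemma integral_comp_sub_left {R : ℝ → X →L[ℂ] Y} {ν μ : Measure ℝ} [IsFiniteMeasure μ]
    {q : ℝ≥0∞} {A : ℝ≥0} (hR : IsLpKernel R ν μ q A) {P : ℝ → X} (hP : IsTrigPoly1 P) :
    IsTrigPoly1 fun t => ∫ r, R r (P (t - r)) ∂ν := by
  obtain ⟨m, lam, c, hPsum⟩ := hP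
  let e (j : Fin m) (t : ℝ) : ℂ := Complex.exp (Complex.I * ((lam j * t : ℝ) : ℂ))
  have he (j : Fin m) (t r : ℝ) : e j (t - r) = e j t * e j (-r) := by
    simp only [e, ← Complex.exp_add]
    congr 1
    push_cast
    ring
  have hint (j : Fin m) : Integrable (fun r => R r (e j (-r) • c j)) ν := by
    refine hR.integrable ?_
    simpa [e] using (isTrigPoly1_exp_smul (-lam j) (c j)).memLp
  refine ⟨m, lam, fun j => ∫ r, R r (e j (-r) • c j) ∂ν, fun t => ?_⟩
  calc ∫ r, R r (P (t - r)) ∂ν = ∫ r, ∑ j, e j t • R r (e j (-r) • c j) ∂ν := by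
        simp_rw [hPsum, map_sum, ← map_smul, smul_smul, ← he, e]
    _ = ∑ j, e j t • ∫ r, R r (e j (-r) • c j) ∂ν := by
        rw [integral_finsetSum _ fun j _ => (hint j).fun_smul _]
        simp_rw [integral_smul]

end IsTrigPoly1

end TrigonometricPolynomial

section BesicovitchMean

/-- The upper mean `limsup_{t → ∞} t^(-b) ∫_{-t}^{t} g` of order `b`; for `g = ‖f‖ ^ q` and `b = 1`
it is, up to a factor, the `q`-th power of the classical Besicovitch seminorm of `f`. -/
def besicovitchMean (b : ℝ) (g : ℝ → ℝ≥0∞) : ℝ≥0∞ :=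
  limsup (fun t : ℝ => ENNReal.ofReal (t ^ (-b)) * ∫⁻ s in Set.Icc (-t) t, g s) atTop

lemma besicovitchMean_mono {b : ℝ} {g h : ℝ → ℝ≥0∞} (hgh : ∀ s, g s ≤ h s) :
    besicovitchMean b g ≤ besicovitchMean b h :=
  limsup_le_limsup (Eventually.of_forall fun t => by
    dsimp only
    gcongr
    exact hgh _)

lemma besicovitchMean_const_mul {b : ℝ} {c : ℝ≥0∞} (hc : c ≠ ∞) (g : ℝ → ℝ≥0∞) :
    besicovitchMean b (fun s => c * g s) = c * besicovitchMean b g := by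
  simp only [besicovitchMean, lintegral_const_mul' c g hc, mul_left_comm _ c,
    ENNReal.limsup_const_mul_of_ne_top hc]

lemma limsup_ofReal_rpow_mul_setLIntegral_rpow {a p : ℝ} (hp : 0 < p) (g : ℝ → ℝ≥0∞) :
    limsup (fun t : ℝ =>
      ENNReal.ofReal (t ^ (-a)) * (∫⁻ s in Set.Icc (-t) t, g s) ^ (1 / p)) atTop =
      besicovitchMean (a * p) g ^ (1 / p) := by
  refine Eq.trans (limsup_congr ?_)
    ((ENNReal.orderIsoRpow (1 / p) (by positivity)).limsup_apply).symm
  filter_upwards [eventually_gt_atTop 0] with t ht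
  rw [ENNReal.orderIsoRpow_apply, ENNReal.mul_rpow_of_nonneg _ _ (by positivity),
    ENNReal.ofReal_rpow_of_nonneg (by positivity) (by positivity), ← Real.rpow_mul ht.le]
  congr 3
  field_simp

lemma memBes1_iff {X : Type*} [NormedAddCommGroup X] [NormedSpace ℂ X] {α a p : ℝ} (hp : 0 < p)
    (hαp : 0 ≤ α * p) {g : ℝ → X} :
    MemBes1 α a p g ↔ ∃ P : ℕ → ℝ → X, (∀ k, IsTrigPoly1 (P k)) ∧
      Tendsto (fun k => besicovitchMean (a * p) fun s => ‖g s - P k s‖ₑ ^ (α * p))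
        atTop (𝓝 0) := by
  have hp_inv : 0 < 1 / p := by positivity
  simp only [MemBes1, ← ENNReal.ofReal_rpow_of_nonneg (norm_nonneg _) hαp, ofReal_norm,
    limsup_ofReal_rpow_mul_setLIntegral_rpow hp]
  have hroot (u : ℕ → ℝ≥0∞) :
      Tendsto (fun k => u k ^ (1 / p)) atTop (𝓝 0) ↔ Tendsto u atTop (𝓝 0) := by
    refine ⟨fun h => ?_, fun h => ?_⟩
    · simpa [← ENNReal.rpow_mul, hp.ne', hp] using h.ennrpow_const p
    · simpa only [ENNReal.zero_rpow_of_pos hp_inv] using h.ennrpow_const (1 / p)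
  simp only [hroot]

lemma setLIntegral_ofReal_one_add_abs_sub_rpow_neg_le {γ T s : ℝ} (hγ : 0 ≤ γ)
    (hs : 2 * T ≤ |s|) :
    ∫⁻ t in Set.Icc (-T) T, ENNReal.ofReal ((1 + |t - s|) ^ (-γ)) ≤
      ENNReal.ofReal (2 ^ γ) * ENNReal.ofReal (2 * T) * ENNReal.ofReal ((1 + |s|) ^ (-γ)) := by
  calc ∫⁻ t in Set.Icc (-T) T, ENNReal.ofReal ((1 + |t - s|) ^ (-γ))
      ≤ ∫⁻ _ in Set.Icc (-T) T, ENNReal.ofReal (2 ^ γ) * ENNReal.ofReal ((1 + |s|) ^ (-γ)) := by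
        refine setLIntegral_mono' measurableSet_Icc fun t ht => ?_
        refine ofReal_one_add_abs_rpow_neg_le hγ two_pos ?_
        have ht' : |t| ≤ T := abs_le.2 ht
        linarith [abs_sub_abs_le_abs_sub s t, abs_sub_comm s t]
    _ = _ := by
        rw [setLIntegral_const, Real.volume_Icc, sub_neg_eq_add, ← two_mul]
        ring

lemma setLIntegral_lintegral_comp_sub_left_decayMeasure_le {γ : ℝ} (hγ : 0 ≤ γ)
    {g : ℝ → ℝ≥0∞} (hg : AEMeasurable g) (T : ℝ) :
    ∫⁻ t in Set.Icc (-T) T, ∫⁻ r, g (t - r) ∂decayMeasure γ ≤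
      decayMeasure γ Set.univ * (∫⁻ s in Set.Icc (-(2 * T)) (2 * T), g s) +
        ENNReal.ofReal (2 ^ γ) * ENNReal.ofReal (2 * T) *
          ∫⁻ s in (Set.Icc (-(2 * T)) (2 * T))ᶜ, g s ∂decayMeasure γ := by
  let w (r : ℝ) : ℝ≥0∞ := ENNReal.ofReal ((1 + |r|) ^ (-γ))
  have hw : Measurable w := by fun_prop
  have hnear (s : ℝ) : ∫⁻ t in Set.Icc (-T) T, w (t - s) ≤ decayMeasure γ Set.univ := by
    calc ∫⁻ t in Set.Icc (-T) T, w (t - s) ≤ ∫⁻ t, w (t - s) := setLIntegral_le_lintegral _ _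
      _ = decayMeasure γ Set.univ := by
        rw [lintegral_sub_right_eq_self w s, decayMeasure, withDensity_apply' _ _,
          setLIntegral_univ]
  calc ∫⁻ t in Set.Icc (-T) T, ∫⁻ r, g (t - r) ∂decayMeasure γ
      = ∫⁻ t in Set.Icc (-T) T, ∫⁻ s, w (t - s) * g s := by
        simp only [lintegral_comp_sub_left_decayMeasure hg, w]
    _ = ∫⁻ s, (∫⁻ t in Set.Icc (-T) T, w (t - s)) * g s := by
        rw [lintegral_lintegral_swap (by fun_prop)]
        exact lintegral_congr fun s => lintegral_mul_const _ (by fun_prop)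
    _ ≤ (∫⁻ s in Set.Icc (-(2 * T)) (2 * T), decayMeasure γ Set.univ * g s) +
          ∫⁻ s in (Set.Icc (-(2 * T)) (2 * T))ᶜ,
            ENNReal.ofReal (2 ^ γ) * ENNReal.ofReal (2 * T) * (w s * g s) := by
        rw [← lintegral_add_compl _ (measurableSet_Icc (a := -(2 * T)) (b := 2 * T))]
        refine add_le_add (lintegral_mono fun s => mul_le_mul_left (hnear s) _)
          (setLIntegral_mono' measurableSet_Icc.compl fun s hs => ?_)
        rw [← mul_assoc]
        have hs' : 2 * T ≤ |s| := (lt_of_not_ge fun h => hs (abs_le.1 h)).le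
        exact mul_le_mul_left (setLIntegral_ofReal_one_add_abs_sub_rpow_neg_le hγ hs') _
    _ = _ := by
        rw [lintegral_const_mul'' _ hg.restrict,
          lintegral_const_mul' _ _ (ENNReal.mul_ne_top ENNReal.ofReal_ne_top ENNReal.ofReal_ne_top),
          decayMeasure,
          restrict_withDensity measurableSet_Icc.compl,
          lintegral_withDensity_eq_lintegral_mul₀ hw.aemeasurable hg.restrict]
        rfl

lemma tendsto_setLIntegral_compl_Icc_zero {μ : Measure ℝ} [IsFiniteMeasure μ] {g : ℝ → ℝ≥0∞}
    (hg : ∫⁻ s, g s ∂μ ≠ ∞) :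
    Tendsto (fun T : ℝ => ∫⁻ s in (Set.Icc (-T) T)ᶜ, g s ∂μ) atTop (𝓝 0) := by
  have hcompl (T : ℝ) : (Set.Icc (-T) T)ᶜ = {s | T < ‖s‖} := by
    ext s
    rw [Set.mem_compl_iff, Set.mem_Icc, ← abs_le, not_le, Set.mem_ofPred, Real.norm_eq_abs]
  refine tendsto_setLIntegral_zero hg ?_
  simpa [Function.comp_def, hcompl] using
    tendsto_measure_norm_gt_of_isTightMeasureSet (isTightMeasureSet_singleton (μ := μ))

lemma ofReal_rpow_neg_eq_ofReal_two_rpow_mul {b t : ℝ} (ht : 0 ≤ t) :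
    ENNReal.ofReal (t ^ (-b)) = ENNReal.ofReal (2 ^ b) * ENNReal.ofReal ((2 * t) ^ (-b)) := by
  rw [← ENNReal.ofReal_mul (by positivity), Real.mul_rpow two_pos.le ht, ← mul_assoc,
    ← Real.rpow_add two_pos, add_neg_cancel, Real.rpow_zero, one_mul]

lemma ofReal_rpow_neg_mul_ofReal_two_mul_le {b t : ℝ} (hb : 1 ≤ b) (ht : 1 ≤ t) :
    ENNReal.ofReal (t ^ (-b)) * ENNReal.ofReal (2 * t) ≤ ENNReal.ofReal 2 := by
  have : 0 < t := by linarith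
  rw [← ENNReal.ofReal_mul (by positivity)]
  refine ENNReal.ofReal_le_ofReal ?_
  calc t ^ (-b) * (2 * t) ≤ t ^ (-1 : ℝ) * (2 * t) := by gcongr
    _ = 2 := by
      rw [Real.rpow_neg_one]
      field_simp

lemma besicovitchMean_lintegral_comp_sub_left_le {γ b : ℝ} (hγ : 1 < γ) (hb : 1 ≤ b)
    {g : ℝ → ℝ≥0∞} (hg : AEMeasurable g) (hfin : ∫⁻ s, g s ∂decayMeasure γ ≠ ∞) :
    besicovitchMean b (fun t => ∫⁻ r, g (t - r) ∂decayMeasure γ) ≤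
      ENNReal.ofReal (2 ^ b) * decayMeasure γ Set.univ * besicovitchMean b g := by
  have := isFiniteMeasure_decayMeasure hγ
  have hdouble : Tendsto (fun t : ℝ => 2 * t) atTop atTop := tendsto_id.const_mul_atTop two_pos
  let u (t : ℝ) : ℝ≥0∞ := ENNReal.ofReal (t ^ (-b)) * ∫⁻ s in Set.Icc (-t) t, g s
  let tail (t : ℝ) : ℝ≥0∞ := ENNReal.ofReal (2 ^ γ) * ENNReal.ofReal 2 *
    ∫⁻ s in (Set.Icc (-(2 * t)) (2 * t))ᶜ, g s ∂decayMeasure γ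
  have htail : Tendsto tail atTop (𝓝 0) := by
    simpa using! ENNReal.Tendsto.const_mul
      ((tendsto_setLIntegral_compl_Icc_zero hfin).comp hdouble)
      (Or.inr (ENNReal.mul_ne_top ENNReal.ofReal_ne_top ENNReal.ofReal_ne_top))
  have hC : ENNReal.ofReal (2 ^ b) * decayMeasure γ Set.univ ≠ ∞ :=
    ENNReal.mul_ne_top ENNReal.ofReal_ne_top (measure_ne_top _ _)
  calc besicovitchMean b (fun t => ∫⁻ r, g (t - r) ∂decayMeasure γ)
      ≤ limsup (fun t => ENNReal.ofReal (2 ^ b) * decayMeasure γ Set.univ * u (2 * t) + tail t)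
          atTop := by
        refine limsup_le_limsup ?_
        filter_upwards [eventually_ge_atTop 1] with t ht
        dsimp only [u, tail]
        grw [setLIntegral_lintegral_comp_sub_left_decayMeasure_le (by linarith) hg t, mul_add]
        refine add_le_add (le_of_eq ?_) ?_
        · rw [ofReal_rpow_neg_eq_ofReal_two_rpow_mul (by linarith)]
          ring
        · calc _ = ENNReal.ofReal (2 ^ γ) * (ENNReal.ofReal (t ^ (-b)) * ENNReal.ofReal (2 * t)) *
                ∫⁻ s in (Set.Icc (-(2 * t)) (2 * t))ᶜ, g s ∂decayMeasure γ := by ring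
            _ ≤ _ := by grw [ofReal_rpow_neg_mul_ofReal_two_mul_le hb ht]
    _ = ENNReal.ofReal (2 ^ b) * decayMeasure γ Set.univ * limsup (fun t => u (2 * t)) atTop :=
        (ENNReal.limsup_add_of_right_tendsto_zero htail _).trans
          (ENNReal.limsup_const_mul_of_ne_top hC)
    _ ≤ ENNReal.ofReal (2 ^ b) * decayMeasure γ Set.univ * besicovitchMean b g := by
        gcongr
        exact hdouble.limsup_comp_le_limsup (u := u)

end BesicovitchMean

section InfiniteConvolution

lemma eLpNorm_comp_sub_left_decayMeasure_rpow_le_of_stepanov {E : Type*} [NormedAddCommGroup E]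
    {γ q : ℝ} (hγ : 0 ≤ γ) (hq : 0 < q) {f : ℝ → E} (hf : AEStronglyMeasurable f) {C : ℝ≥0∞}
    (hC : ∀ t, ∫⁻ s in Set.Icc t (t + 1), ‖f s‖ₑ ^ q ≤ C) (t : ℝ) :
    eLpNorm (fun r => f (t - r)) (ENNReal.ofReal q) (decayMeasure γ) ^ q ≤
      ENNReal.ofReal (2 ^ γ) * C * decayMeasure γ Set.univ := by
  rw [eLpNorm_ofReal_rpow_eq_lintegral hq]
  exact lintegral_comp_sub_left_decayMeasure_le_of_stepanov hγ (hf.enorm.pow_const q) hC t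

lemma memLp_decayMeasure_of_stepanov {E : Type*} [NormedAddCommGroup E] {γ q : ℝ} (hγ : 1 < γ)
    (hq : 0 < q) {f : ℝ → E} (hf : AEStronglyMeasurable f) {C : ℝ≥0∞} (hC_top : C ≠ ∞)
    (hC : ∀ t, ∫⁻ s in Set.Icc t (t + 1), ‖f s‖ₑ ^ q ≤ C) :
    MemLp f (ENNReal.ofReal q) (decayMeasure γ) := by
  have hγ0 : 0 ≤ γ := by linarith
  have := isFiniteMeasure_decayMeasure hγ
  have hbound : ENNReal.ofReal (2 ^ γ) * C * decayMeasure γ Set.univ < ∞ :=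
    ENNReal.mul_lt_top (ENNReal.mul_lt_top ENNReal.ofReal_lt_top hC_top.lt_top) (measure_lt_top _ _)
  have hreflect : MemLp (fun r => f (0 - r)) (ENNReal.ofReal q) (decayMeasure γ) := by
    refine ⟨(hf.comp_quasiMeasurePreserving
      (Measure.measurePreserving_sub_left volume 0).quasiMeasurePreserving).mono_ac
      decayMeasure_absolutelyContinuous_volume, (ENNReal.rpow_lt_top_iff_of_pos hq).1 ?_⟩
    exact (eLpNorm_comp_sub_left_decayMeasure_rpow_le_of_stepanov hγ0 hq hf hC 0).trans_lt hbound
  simpa using memLp_comp_sub_left_decayMeasure hγ0 hreflect 0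

namespace IsLpKernel

variable {𝕜 X Y : Type*} [NontriviallyNormedField 𝕜]
  [NormedAddCommGroup X] [NormedSpace 𝕜 X] [NormedAddCommGroup Y] [NormedSpace 𝕜 Y]
  [NormedSpace ℝ Y] {R : ℝ → X →L[𝕜] Y} {ν : Measure ℝ} {A : ℝ≥0} {γ : ℝ} {f : ℝ → X}

lemma exists_norm_integral_le_of_stepanov {q : ℝ} (hγ : 1 < γ) (hq : 0 < q)
    (hR : IsLpKernel R ν (decayMeasure γ) (ENNReal.ofReal q) A) (hf : AEStronglyMeasurable f)
    {C : ℝ≥0∞} (hC_top : C ≠ ∞) (hC : ∀ t, ∫⁻ s in Set.Icc t (t + 1), ‖f s‖ₑ ^ q ≤ C) :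
    ∃ K : ℝ, ∀ t, ‖∫ r, R r (f (t - r)) ∂ν‖ ≤ K := by
  have hγ0 : 0 ≤ γ := by linarith
  have := isFiniteMeasure_decayMeasure hγ
  have hfL := memLp_decayMeasure_of_stepanov hγ hq hf hC_top hC
  let D : ℝ≥0∞ := ENNReal.ofReal (2 ^ γ) * C * decayMeasure γ Set.univ
  have hD : D ≠ ∞ :=
    ENNReal.mul_ne_top (ENNReal.mul_ne_top ENNReal.ofReal_ne_top hC_top) (measure_ne_top _ _)
  have hK : A * D ^ q⁻¹ ≠ ∞ :=
    ENNReal.mul_ne_top ENNReal.coe_ne_top (ENNReal.rpow_ne_top_of_nonneg (by positivity) hD)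
  refine ⟨(A * D ^ q⁻¹).toReal, fun t => ?_⟩
  rw [← toReal_enorm]
  refine ENNReal.toReal_mono hK ?_
  calc ‖∫ r, R r (f (t - r)) ∂ν‖ₑ
      ≤ A * eLpNorm (fun r => f (t - r)) (ENNReal.ofReal q) (decayMeasure γ) :=
        hR.enorm_integral_le (memLp_comp_sub_left_decayMeasure hγ0 hfL t).1
    _ ≤ A * D ^ q⁻¹ := by
        gcongr
        exact (ENNReal.le_rpow_inv_iff hq).2
          (eLpNorm_comp_sub_left_decayMeasure_rpow_le_of_stepanov hγ0 hq hf hC t)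

lemma besicovitchMean_integral_sub_integral_le {b q : ℝ} (hγ : 1 < γ) (hb : 1 ≤ b) (hq : 0 < q)
    (hR : IsLpKernel R ν (decayMeasure γ) (ENNReal.ofReal q) A) {g : ℝ → X}
    (hf : MemLp f (ENNReal.ofReal q) (decayMeasure γ))
    (hg : MemLp g (ENNReal.ofReal q) (decayMeasure γ)) :
    besicovitchMean b
        (fun t => ‖(∫ r, R r (f (t - r)) ∂ν) - ∫ r, R r (g (t - r)) ∂ν‖ₑ ^ q) ≤
      (A : ℝ≥0∞) ^ q * (ENNReal.ofReal (2 ^ b) * decayMeasure γ Set.univ *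
        besicovitchMean b fun s => ‖f s - g s‖ₑ ^ q) := by
  have hγ0 : 0 ≤ γ := by linarith
  have hA : (A : ℝ≥0∞) ^ q ≠ ∞ := ENNReal.rpow_ne_top_of_nonneg hq.le ENNReal.coe_ne_top
  have hfg : MemLp (fun s => f s - g s) (ENNReal.ofReal q) (decayMeasure γ) := hf.sub hg
  have hfg_vol : AEMeasurable fun s => ‖f s - g s‖ₑ ^ q :=
    (hfg.1.mono_ac volume_absolutelyContinuous_decayMeasure).enorm.pow_const q
  have hfin : ∫⁻ s, ‖f s - g s‖ₑ ^ q ∂decayMeasure γ ≠ ∞ := by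
    rw [← eLpNorm_ofReal_rpow_eq_lintegral hq]
    exact ENNReal.rpow_ne_top_of_nonneg hq.le hfg.2.ne
  calc besicovitchMean b
        (fun t => ‖(∫ r, R r (f (t - r)) ∂ν) - ∫ r, R r (g (t - r)) ∂ν‖ₑ ^ q)
      ≤ besicovitchMean b fun t =>
          (A : ℝ≥0∞) ^ q * ∫⁻ r, ‖f (t - r) - g (t - r)‖ₑ ^ q ∂decayMeasure γ :=
        besicovitchMean_mono fun t => hR.enorm_integral_sub_integral_rpow_le hq
          (memLp_comp_sub_left_decayMeasure hγ0 hf t) (memLp_comp_sub_left_decayMeasure hγ0 hg t)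
    _ = (A : ℝ≥0∞) ^ q *
          besicovitchMean b fun t => ∫⁻ r, ‖f (t - r) - g (t - r)‖ₑ ^ q ∂decayMeasure γ :=
        besicovitchMean_const_mul hA _
    _ ≤ _ := mul_le_mul_right
        (besicovitchMean_lintegral_comp_sub_left_le hγ hb hfg_vol hfin) _

end IsLpKernel

lemma IsLpKernel.memBes1_integral {X Y : Type*} [NormedAddCommGroup X] [NormedSpace ℂ X]
    [NormedAddCommGroup Y] [NormedSpace ℂ Y] {R : ℝ → X →L[ℂ] Y}
    {ν : Measure ℝ} {A : ℝ≥0} {f : ℝ → X} {γ α a p : ℝ}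
    (hγ : 1 < γ) (hp : 0 < p) (hαp : 0 < α * p) (hap : 1 ≤ a * p)
    (hR : IsLpKernel R ν (decayMeasure γ) (ENNReal.ofReal (α * p)) A)
    (hf : MemLp f (ENNReal.ofReal (α * p)) (decayMeasure γ)) (hfB : MemBes1 α a p f) :
    MemBes1 α a p fun t => ∫ r, R r (f (t - r)) ∂ν := by
  have := isFiniteMeasure_decayMeasure hγ
  rw [memBes1_iff hp hαp.le] at hfB ⊢
  obtain ⟨P, hP, hlim⟩ := hfB
  refine ⟨fun k t => ∫ r, R r (P k (t - r)) ∂ν, fun k => (hP k).integral_comp_sub_left hR, ?_⟩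
  refine tendsto_of_tendsto_of_tendsto_of_le_of_le tendsto_const_nhds ?_ (fun k => zero_le)
    fun k => hR.besicovitchMean_integral_sub_integral_le hγ hap hαp hf (hP k).memLp
  have hA : (A : ℝ≥0∞) ^ (α * p) ≠ ∞ := ENNReal.rpow_ne_top_of_nonneg hαp.le ENNReal.coe_ne_top
  have hC : ENNReal.ofReal (2 ^ (a * p)) * decayMeasure γ Set.univ ≠ ∞ :=
    ENNReal.mul_ne_top ENNReal.ofReal_ne_top (measure_ne_top _ _)
  simpa using ENNReal.Tendsto.const_mul (ENNReal.Tendsto.const_mul hlim (Or.inr hC)) (Or.inr hA)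

end InfiniteConvolution

theorem besicovitch_stmt16_general {X Y : Type*}
    [NormedAddCommGroup X] [NormedSpace ℂ X]
    [NormedAddCommGroup Y] [NormedSpace ℂ Y] [CompleteSpace Y]
    (R : ℝ → X →L[ℂ] Y)
    (hRmeas : ∀ x, AEStronglyMeasurable (fun t => R t x) (volume.restrict (Set.Ioi 0)))
    (M β γ : ℝ) (hβ : β ≤ 1) (hγ : 1 < γ)
    (hR : ∀ t : ℝ, 0 < t → ‖R t‖ ≤ M * t ^ (β - 1) / (1 + t ^ γ))
    (a α p : ℝ) (hp : 0 < p) (hαp : 1 ≤ α * p) (hap : 1 ≤ a * p)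
    (hcase1 : 1 < α * p → -1 < α * p * (β - 1) / (α * p - 1))
    (hcase2 : α * p = 1 → β = 1)
    (f : ℝ → X) (hfmeas : AEStronglyMeasurable f)
    (hfStep : ∃ C : ℝ≥0∞, C < ⊤ ∧ ∀ t : ℝ,
      ∫⁻ s in Set.Icc t (t + 1), ENNReal.ofReal (‖f s‖ ^ (α * p)) ≤ C)
    (hf : MemBes1 α a p f) :
    (∀ t : ℝ, IntegrableOn (fun s => R (t - s) (f s)) (Set.Iio t)) ∧
    (∃ C : ℝ, ∀ t : ℝ, ‖∫ s in Set.Iio t, R (t - s) (f s)‖ ≤ C) ∧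
    Continuous (fun t : ℝ => ∫ s in Set.Iio t, R (t - s) (f s)) ∧
    MemBes1 α a p (fun t : ℝ => ∫ s in Set.Iio t, R (t - s) (f s)) := by
  have hq : 0 < α * p := by linarith
  obtain ⟨C, hC_top, hC⟩ := hfStep
  simp only [← ENNReal.ofReal_rpow_of_nonneg (norm_nonneg _) hq.le, ofReal_norm] at hC
  obtain ⟨A, hA⟩ := exists_isLpKernel_of_norm_le hRmeas hβ hγ hR hαp hcase1 hcase2
  have hfL := memLp_decayMeasure_of_stepanov hγ hq hfmeas hC_top.ne hC
  have hsubst (t : ℝ) :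
      ∫ s in Set.Iio t, R (t - s) (f s) = ∫ r in Set.Ioi 0, R r (f (t - r)) := by
    simpa using setIntegral_Iio_comp_sub_left (fun r => R r (f (t - r))) t
  simp only [hsubst]
  refine ⟨fun t => ?_, hA.exists_norm_integral_le_of_stepanov hγ hq hfmeas hC_top.ne hC,
    hA.continuous_integral hγ ENNReal.ofReal_ne_top hfL, hA.memBes1_integral hγ hp hq hap hfL hf⟩
  simpa using integrableOn_Iio_comp_sub_left_iff (t := t).2
    (hA.integrable (memLp_comp_sub_left_decayMeasure (by linarith) hfL t))

/-- invariance of the class `e-(x^α,t^{−a})-B^p(ℝ : ·)` under the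
infinite convolution product `F(t) = ∫_{−∞}^t R(t−s) f(s) ds`, for a Stepanov
bounded inhomogeneity `f`. -/
theorem besicovitch_stmt16 {X Y : Type*}
    [NormedAddCommGroup X] [NormedSpace ℂ X] [CompleteSpace X]
    [NormedAddCommGroup Y] [NormedSpace ℂ Y] [CompleteSpace Y]
    (R : ℝ → X →L[ℂ] Y)
    (hRcont : ∀ x : X, ContinuousOn (fun t => R t x) (Set.Ioi 0))
    (M β γ : ℝ) (hM : 0 < M) (hβ : β ∈ Set.Ioc (0 : ℝ) 1) (hγ : 1 < γ)
    (hR : ∀ t : ℝ, 0 < t → ‖R t‖ ≤ M * t ^ (β - 1) / (1 + t ^ γ))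
    (a α p : ℝ) (ha : 0 < a) (hα : 0 < α) (hp : 1 ≤ p)
    (hαp : 1 ≤ α * p) (hap : 1 ≤ a * p)
    (hcase1 : 1 < α * p → -1 < α * p * (β - 1) / (α * p - 1))
    (hcase2 : α * p = 1 → β = 1)
    (f : ℝ → X) (hfmeas : StronglyMeasurable f)
    -- `f` is Stepanov-(αp)-bounded
    (hfStep : ∃ C : ℝ≥0∞, C < ⊤ ∧ ∀ t : ℝ,
      ∫⁻ s in Set.Icc t (t + 1), ENNReal.ofReal (‖f s‖ ^ (α * p)) ≤ C)
    (hf : MemBes1 α a p f) :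
    (∀ t : ℝ, IntegrableOn (fun s => R (t - s) (f s)) (Set.Iio t)) ∧
    (∃ C : ℝ, ∀ t : ℝ, ‖∫ s in Set.Iio t, R (t - s) (f s)‖ ≤ C) ∧
    Continuous (fun t : ℝ => ∫ s in Set.Iio t, R (t - s) (f s)) ∧
    MemBes1 α a p (fun t : ℝ => ∫ s in Set.Iio t, R (t - s) (f s)) :=
  besicovitch_stmt16_general R (fun x => (hRcont x).aestronglyMeasurable measurableSet_Ioi) M β γ
    hβ.2 hγ hR a α p (one_pos.trans_le hp) hαp hap hcase1 hcase2 f hfmeas.aestronglyMeasurable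
    hfStep hf
end
end

section
/- Let (R(t))_{t>0} ⊆ L(X,Y) be a strongly continuous operator family satisfying ‖R(t)‖_{L(X,Y)} ≤ M·t^{β−1}/(1+t^γ) for all t > 0, with constants M > 0, β ∈ (0,1] and γ > 1. Let a > 0, α > 0, p ∈ [1,∞) with αp ≥ 1 and ap ≥ 1, and assume αp(β−1)/(αp−1) > −1 in case αp > 1, and β = 1 in case αp = 1. Let f : ℝ → X be Lebesgue measurable, belong to e-(x^α, t^{−a})-B^p(ℝ : X), and satisfy ‖f(t)‖ ≤ M₀·(1+|t|)^b for all t ∈ ℝ, for some M₀ > 0 and some b ∈ [0, γ−β). Then the function F(t) := ∫_{−∞}^{t} R(t−s) f(s) ds is well-defined, continuous, belongs to e-(x^α, t^{−a})-B^p(ℝ : Y), and there exists M′ > 0 with ‖F(t)‖_Y ≤ M′·(1+|t|)^b for all t ∈ ℝ. -/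
open MeasureTheory Filter Topology ENNReal NNReal

noncomputable section

/-!
Convolution with `R` maps `e^{iλ·} c` to `e^{iλ·} c'`, hence trigonometric polynomials to
trigonometric polynomials, so it suffices to bound the Besicovitch seminorm of `R * g` by a
constant times that of `g = f - P`. For `|s| ≤ t` the part of `(R * g)(s)` coming from `R` on
`(0, t]` only involves `g` on `[-2t, 2t]` and is controlled by Young's inequality; the polynomial
growth of `g` and the integrability of `‖R(u)‖ (1 + u)^b` make the rest tend to `0` uniformly in
`|s| ≤ t`, and since `ap ≥ 1` such a term does not contribute to the seminorm.
-/

lemma aestronglyMeasurable_apply_of_forall_apply {𝕜 Ω X Y : Type*} [NontriviallyNormedField 𝕜]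
    [NormedAddCommGroup X] [NormedSpace 𝕜 X] [NormedAddCommGroup Y] [NormedSpace 𝕜 Y]
    [MeasurableSpace Ω] {μ : Measure Ω} {R : Ω → X →L[𝕜] Y} {φ : Ω → X}
    (hR : ∀ x, AEStronglyMeasurable (fun ω => R ω x) μ) (hφ : AEStronglyMeasurable φ μ) :
    AEStronglyMeasurable (fun ω => R ω (φ ω)) μ := by
  have simple_case (s : SimpleFunc Ω X) : AEStronglyMeasurable (fun ω => R ω (s ω)) μ := by
    induction s using SimpleFunc.induction with
    | @const x S hS =>
      refine ((hR x).indicator hS).congr (.of_forall fun ω => ?_)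
      simp only [SimpleFunc.coe_piecewise, SimpleFunc.coe_const, Function.const_zero,
        Set.piecewise_eq_indicator]
      by_cases hω : ω ∈ S <;> simp [hω]
    | add _ h₁ h₂ => simpa only [SimpleFunc.coe_add, Pi.add_apply, map_add] using h₁.fun_add h₂
  refine aestronglyMeasurable_of_tendsto_ae atTop
    (fun n => simple_case (hφ.stronglyMeasurable_mk.approx n)) ?_
  filter_upwards [hφ.ae_eq_mk] with ω hω
  rw [hω]
  exact ((R ω).continuous.tendsto _).comp (hφ.stronglyMeasurable_mk.tendsto_approx ω)

lemma exists_subseq_ae_tendsto_comp_sub_left {G E : Type*} [AddGroup G] [TopologicalSpace G]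
    [IsTopologicalAddGroup G] [MeasurableSpace G] [BorelSpace G] {μ : Measure G}
    [IsLocallyFiniteMeasure μ] [μ.InnerRegularCompactLTTop] [μ.IsAddLeftInvariant]
    [μ.IsNegInvariant] [NormedAddCommGroup E] {ψ : G → E} (hψ : Integrable ψ μ)
    {x : ℕ → G} {t : G} (hx : Tendsto x atTop (𝓝 t)) :
    ∃ ns : ℕ → ℕ, StrictMono ns ∧
      ∀ᵐ u ∂μ, Tendsto (fun n => ψ (x (ns n) - u)) atTop (𝓝 (ψ (t - u))) := by
  let reflect : C(G, C(G, G)) := ContinuousMap.curry ⟨fun z : G × G => z.1 - z.2, by fun_prop⟩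
  have reflect_mp (s : G) : MeasurePreserving (reflect s) μ μ :=
    Measure.measurePreserving_sub_left μ s
  let f : Lp E 1 μ := (memLp_one_iff_integrable.2 hψ).toLp ψ
  have L1_cont : Continuous fun s => Lp.compMeasurePreserving (reflect s) (reflect_mp s) f :=
    continuous_const.compMeasurePreservingLp reflect.continuous reflect_mp one_ne_top
  obtain ⟨ns, ns_mono, hns⟩ :=
    (tendstoInMeasure_of_tendsto_Lp ((L1_cont.tendsto t).comp hx)).exists_seq_tendsto_ae
  have coe_eq (s : G) : Lp.compMeasurePreserving (reflect s) (reflect_mp s) f =ᵐ[μ]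
      fun u => ψ (s - u) :=
    (Lp.coeFn_compMeasurePreserving f (reflect_mp s)).trans
      ((reflect_mp s).quasiMeasurePreserving.ae_eq_comp (MemLp.coeFn_toLp _))
  refine ⟨ns, ns_mono, ?_⟩
  filter_upwards [hns, coe_eq t, ae_all_iff.2 fun n => coe_eq (x (ns n))] with u hu ht hn
  simpa only [Function.comp_apply, ht, hn] using hu

lemma lintegral_mul_rpow_le {Ω : Type*} [MeasurableSpace Ω] {μ : Measure Ω} {k h : Ω → ℝ≥0∞}
    (hk : AEMeasurable k μ) (hh : AEMeasurable h μ) {q : ℝ} (hq : 1 ≤ q) :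
    (∫⁻ u, k u * h u ∂μ) ^ q ≤ (∫⁻ u, k u ∂μ) ^ (q - 1) * ∫⁻ u, k u * h u ^ q ∂μ := by
  have hq0 : 0 < q := by linarith
  have one_sub_nonneg : 0 ≤ 1 - 1 / q := by rw [sub_nonneg, div_le_one hq0]; exact hq
  have split (u : Ω) : k u * h u = k u ^ (1 - 1 / q) * (k u * h u ^ q) ^ (1 / q) := by
    rw [ENNReal.mul_rpow_of_nonneg _ _ (by positivity), ← ENNReal.rpow_mul,
      mul_one_div_cancel hq0.ne', ENNReal.rpow_one, ← mul_assoc,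
      ← ENNReal.rpow_add_of_nonneg _ _ one_sub_nonneg (by positivity), sub_add_cancel,
      ENNReal.rpow_one]
  have hölder : ∫⁻ u, k u * h u ∂μ ≤
      (∫⁻ u, k u ∂μ) ^ (1 - 1 / q) * (∫⁻ u, k u * h u ^ q ∂μ) ^ (1 / q) := by
    simp only [split]
    exact ENNReal.lintegral_mul_norm_pow_le hk (by fun_prop) one_sub_nonneg (by positivity)
      (by ring)
  calc (∫⁻ u, k u * h u ∂μ) ^ q
      ≤ ((∫⁻ u, k u ∂μ) ^ (1 - 1 / q) * (∫⁻ u, k u * h u ^ q ∂μ) ^ (1 / q)) ^ q := by gcongr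
    _ = (∫⁻ u, k u ∂μ) ^ (q - 1) * ∫⁻ u, k u * h u ^ q ∂μ := by
      rw [ENNReal.mul_rpow_of_nonneg _ _ hq0.le, ← ENNReal.rpow_mul, ← ENNReal.rpow_mul,
        one_div_mul_cancel hq0.ne', ENNReal.rpow_one, sub_mul, one_div_mul_cancel hq0.ne',
        one_mul]

lemma lintegral_rpow_lintegral_mul_comp_sub_le {G : Type*} [AddGroup G] [MeasurableSpace G]
    [MeasurableAdd₂ G] [MeasurableNeg G] {μ ν : Measure G} [SFinite μ] [SFinite ν]
    [μ.IsAddRightInvariant] {k h : G → ℝ≥0∞} (hk : AEMeasurable k ν) (hh : AEMeasurable h μ)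
    {A B : Set G} (hAB : ∀ᵐ u ∂ν, ∀ s ∈ A, s - u ∈ B) {q : ℝ} (hq : 1 ≤ q) :
    ∫⁻ s in A, (∫⁻ u, k u * h (s - u) ∂ν) ^ q ∂μ ≤
      (∫⁻ u, k u ∂ν) ^ q * ∫⁻ s in B, h s ^ q ∂μ := by
  have hsub : AEMeasurable (fun z : G × G => h (z.1 - z.2)) ((μ.restrict A).prod ν) :=
    (hh.comp_quasiMeasurePreserving (quasiMeasurePreserving_sub_of_right_invariant μ ν)).mono_ac
      (Measure.restrict_le_self.absolutelyContinuous.prod .rfl)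
  have hprod : AEMeasurable (fun z : G × G => k z.2 * h (z.1 - z.2) ^ q)
      ((μ.restrict A).prod ν) := hk.comp_snd.mul (hsub.pow_const q)
  have hslice (u : G) : AEMeasurable (fun s => h (s - u)) μ :=
    hh.comp_quasiMeasurePreserving (measurePreserving_sub_right μ u).quasiMeasurePreserving
  have hfiber : ∀ᵐ s ∂μ.restrict A, AEMeasurable (fun u => h (s - u)) ν :=
    hsub.aestronglyMeasurable.prodMk_left.mono fun _ hs => hs.aemeasurable
  have translate : ∀ᵐ u ∂ν, ∫⁻ s in A, h (s - u) ^ q ∂μ ≤ ∫⁻ s in B, h s ^ q ∂μ := by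
    filter_upwards [hAB] with u hu
    rw [← (measurePreserving_sub_right μ u).setLIntegral_comp_preimage_emb
      (MeasurableEquiv.subRight u).measurableEmbedding _ B]
    exact lintegral_mono_set hu
  calc ∫⁻ s in A, (∫⁻ u, k u * h (s - u) ∂ν) ^ q ∂μ
      ≤ ∫⁻ s in A, (∫⁻ u, k u ∂ν) ^ (q - 1) * ∫⁻ u, k u * h (s - u) ^ q ∂ν ∂μ :=
        lintegral_mono_ae (hfiber.mono fun s hs => lintegral_mul_rpow_le hk hs hq)
    _ = (∫⁻ u, k u ∂ν) ^ (q - 1) * ∫⁻ u, ∫⁻ s in A, k u * h (s - u) ^ q ∂μ ∂ν := by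
        rw [lintegral_const_mul'' _ hprod.lintegral_prod_right', lintegral_lintegral_swap hprod]
    _ ≤ (∫⁻ u, k u ∂ν) ^ (q - 1) * ∫⁻ u, k u * ∫⁻ s in B, h s ^ q ∂μ ∂ν := by
        gcongr (∫⁻ u, k u ∂ν) ^ (q - 1) * ?_
        refine lintegral_mono_ae (translate.mono fun u hu => ?_)
        rw [lintegral_const_mul'' _ ((hslice u).restrict.pow_const q)]
        gcongr
    _ = (∫⁻ u, k u ∂ν) ^ q * ∫⁻ s in B, h s ^ q ∂μ := by
        rw [lintegral_mul_const'' _ hk, ← mul_assoc]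
        nth_rewrite 2 [← ENNReal.rpow_one (∫⁻ u, k u ∂ν)]
        rw [← ENNReal.rpow_add_of_nonneg _ _ (by linarith) zero_le_one, sub_add_cancel]

lemma limsup_le_const_mul_limsup_of_le_add {ι : Type*} {l : Filter ι} {N D ε : ι → ℝ≥0∞}
    {θ : ι → ι} {C : ℝ≥0∞} (hC : C ≠ ⊤) (hθ : Tendsto θ l l) (hε : Tendsto ε l (𝓝 0))
    (h : ∀ᶠ i in l, N i ≤ C * D (θ i) + ε i) : limsup N l ≤ C * limsup D l :=
  calc limsup N l ≤ limsup ((fun i => C * D (θ i)) + ε) l := limsup_le_limsup h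
    _ = C * limsup (D ∘ θ) l := by
      rw [ENNReal.limsup_add_of_right_tendsto_zero hε, ENNReal.limsup_const_mul_of_ne_top hC]
      rfl
    _ ≤ C * limsup D l := by gcongr; exact hθ.limsup_comp_le_limsup

/-- The quantity `t^{-a} (∫_{-t}^t h(s)^{αp} ds)^{1/p}` whose upper limit as `t → ∞` measures the
size of `h` in `MemBes1 α a p`. -/
def besMean (α a p : ℝ) (h : ℝ → ℝ≥0∞) (t : ℝ) : ℝ≥0∞ :=
  ENNReal.ofReal (t ^ (-a)) * (∫⁻ s in Set.Icc (-t) t, h s ^ (α * p)) ^ (1 / p)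

section besMean

variable {α a p : ℝ}

lemma besMean_mono (hαp : 0 ≤ α * p) (hp : 0 ≤ p) {h₁ h₂ : ℝ → ℝ≥0∞} {t : ℝ}
    (h : ∀ s, |s| ≤ t → h₁ s ≤ h₂ s) : besMean α a p h₁ t ≤ besMean α a p h₂ t := by
  unfold besMean
  gcongr _ * ?_ ^ _
  exact setLIntegral_mono' measurableSet_Icc fun s hs =>
    ENNReal.rpow_le_rpow (h s (abs_le.2 hs)) hαp

lemma besMean_add_const_le (hαp : 1 ≤ α * p) (hp : 1 ≤ p) (h : ℝ → ℝ≥0∞) (c : ℝ≥0∞) (t : ℝ) :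
    besMean α a p (fun s => h s + c) t ≤
      (2 ^ (α * p - 1)) ^ (1 / p) * (besMean α a p h t + besMean α a p (fun _ => c) t) := by
  have hp0 : 0 < p := by linarith
  have two_pow_ne_top : (2 : ℝ≥0∞) ^ (α * p - 1) ≠ ⊤ :=
    ENNReal.rpow_ne_top_of_nonneg (by linarith) (by norm_num)
  have integral_le : ∫⁻ s in Set.Icc (-t) t, (h s + c) ^ (α * p) ≤ 2 ^ (α * p - 1) *
      ((∫⁻ s in Set.Icc (-t) t, h s ^ (α * p)) + ∫⁻ _ in Set.Icc (-t) t, c ^ (α * p)) := by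
    rw [← lintegral_add_right _ measurable_const, ← lintegral_const_mul' _ _ two_pow_ne_top]
    exact lintegral_mono fun s => ENNReal.rpow_add_le_mul_rpow_add_rpow _ _ hαp
  unfold besMean
  rw [← mul_add, mul_left_comm]
  gcongr
  refine (ENNReal.rpow_le_rpow integral_le (by positivity)).trans ?_
  rw [ENNReal.mul_rpow_of_nonneg _ _ (by positivity)]
  gcongr
  exact ENNReal.rpow_add_le_add_rpow _ _ (by positivity) (by rwa [div_le_one hp0])

lemma besMean_const_le (hp : 0 < p) (hap : 1 ≤ a * p) (c : ℝ≥0∞) {t : ℝ} (ht : 1 ≤ t) :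
    besMean α a p (fun _ => c) t ≤ ENNReal.ofReal (2 ^ (1 / p)) * c ^ α := by
  have ht0 : 0 < t := by linarith
  have scale_le : t ^ (-a) * (2 * t) ^ (1 / p) ≤ 2 ^ (1 / p) := by
    rw [Real.mul_rpow (by norm_num) ht0.le, mul_left_comm, ← Real.rpow_add ht0]
    refine mul_le_of_le_one_right (by positivity) (Real.rpow_le_one_of_one_le_of_nonpos ht ?_)
    have : 1 / p ≤ a := by rwa [div_le_iff₀ hp]
    linarith
  calc besMean α a p (fun _ => c) t
      = ENNReal.ofReal (t ^ (-a) * (2 * t) ^ (1 / p)) * c ^ α := by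
        rw [besMean, setLIntegral_const, Real.volume_Icc, sub_neg_eq_add, ← two_mul,
          ENNReal.mul_rpow_of_nonneg _ _ (by positivity), ← ENNReal.rpow_mul, mul_assoc α,
          mul_one_div_cancel hp.ne', mul_one, ENNReal.ofReal_rpow_of_pos (by positivity),
          mul_comm (c ^ α), ← mul_assoc, ← ENNReal.ofReal_mul (by positivity)]
    _ ≤ _ := by gcongr

lemma besMean_lintegral_Ioc_mul_comp_sub_le (hαp : 1 ≤ α * p) (hp : 0 < p) {K h : ℝ → ℝ≥0∞}
    (hK : AEMeasurable K (volume.restrict (Set.Ioi 0))) (hh : AEMeasurable h) {t : ℝ}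
    (ht : 0 < t) :
    besMean α a p (fun s => ∫⁻ u in Set.Ioc 0 t, K u * h (s - u)) t ≤
      ENNReal.ofReal (2 ^ a) * (∫⁻ u in Set.Ioi 0, K u) ^ α * besMean α a p h (2 * t) := by
  have hα : 0 < α := pos_of_mul_pos_left (by linarith : 0 < α * p) hp.le
  have sub_mem : ∀ᵐ u ∂volume.restrict (Set.Ioc 0 t), ∀ s ∈ Set.Icc (-t) t,
      s - u ∈ Set.Icc (-(2 * t)) (2 * t) := by
    filter_upwards [ae_restrict_mem measurableSet_Ioc] with u hu s hs
    constructor <;> linarith [hu.1, hu.2, hs.1, hs.2]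
  have young := lintegral_rpow_lintegral_mul_comp_sub_le
    (hK.mono_measure (Measure.restrict_mono Set.Ioc_subset_Ioi_self le_rfl)) hh sub_mem hαp
  have scale : t ^ (-a) = 2 ^ a * (2 * t) ^ (-a) := by
    rw [Real.mul_rpow (by norm_num) ht.le, Real.rpow_neg (by norm_num : (0 : ℝ) ≤ 2)]
    field_simp
  calc _ ≤ ENNReal.ofReal (t ^ (-a)) * ((∫⁻ u in Set.Ioi 0, K u) ^ (α * p) *
        ∫⁻ s in Set.Icc (-(2 * t)) (2 * t), h s ^ (α * p)) ^ (1 / p) := by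
        unfold besMean
        gcongr
        refine young.trans ?_
        gcongr
        exact Set.Ioc_subset_Ioi_self
    _ = _ := by
        rw [besMean, ENNReal.mul_rpow_of_nonneg _ _ (by positivity), ← ENNReal.rpow_mul,
          mul_assoc α, mul_one_div_cancel hp.ne', mul_one, scale,
          ENNReal.ofReal_mul (by positivity)]
        ring

lemma besMean_le_of_le_lintegral_Ioc_add (hαp : 1 ≤ α * p) (hp : 1 ≤ p) (hap : 1 ≤ a * p)
    {K h H : ℝ → ℝ≥0∞} (hK : AEMeasurable K (volume.restrict (Set.Ioi 0))) (hh : AEMeasurable h)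
    {e : ℝ≥0∞} {t : ℝ} (ht : 1 ≤ t)
    (hH : ∀ s, |s| ≤ t → H s ≤ (∫⁻ u in Set.Ioc 0 t, K u * h (s - u)) + e) :
    besMean α a p H t ≤ (2 ^ (α * p - 1)) ^ (1 / p) *
      (ENNReal.ofReal (2 ^ a) * (∫⁻ u in Set.Ioi 0, K u) ^ α * besMean α a p h (2 * t) +
        ENNReal.ofReal (2 ^ (1 / p)) * e ^ α) := by
  have hp0 : 0 < p := by linarith
  refine (besMean_mono (by linarith) hp0.le hH).trans
    ((besMean_add_const_le hαp hp _ _ _).trans ?_)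
  gcongr
  · exact besMean_lintegral_Ioc_mul_comp_sub_le hαp hp0 hK hh (by linarith)
  · exact besMean_const_le hp0 hap _ ht

end besMean

section InfConv

variable {𝕜 X Y : Type*} [NontriviallyNormedField 𝕜] [NormedAddCommGroup X] [NormedSpace 𝕜 X]
  [NormedAddCommGroup Y] [NormedSpace 𝕜 Y]

/-- The infinite convolution product `(R * φ)(t) = ∫_{-∞}^t R(t - s) φ(s) ds`. -/
def infConv [NormedSpace ℝ Y] (R : ℝ → X →L[𝕜] Y) (φ : ℝ → X) (t : ℝ) : Y :=
  ∫ s in Set.Iio t, R (t - s) (φ s)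

/-- A strongly measurable operator family on `(0, ∞)` whose norm is dominated by a scalar `k` that
is integrable there against the weight `(1 + u)^b`; its values outside `(0, ∞)` are irrelevant. -/
structure IsMajorizedKernel (R : ℝ → X →L[𝕜] Y) (k : ℝ → ℝ) (b : ℝ) : Prop where
  aestronglyMeasurable (x : X) :
    AEStronglyMeasurable (fun u => R u x) (volume.restrict (Set.Ioi 0))
  norm_le {u : ℝ} (hu : 0 < u) : ‖R u‖ ≤ k u
  integrableOn : IntegrableOn (fun u => k u * (1 + u) ^ b) (Set.Ioi 0)

/-- `φ` grows at most like `|t|^b`, with a bound valid on the whole line. -/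
def PolyGrowth {E : Type*} [Norm E] (b : ℝ) (φ : ℝ → E) : Prop :=
  ∃ C : ℝ, 0 < C ∧ ∀ t, ‖φ t‖ ≤ C * (1 + |t|) ^ b

lemma infConv_eq_setIntegral_Ioi [NormedSpace ℝ Y] (R : ℝ → X →L[𝕜] Y) (φ : ℝ → X) (t : ℝ) :
    infConv R φ t = ∫ u in Set.Ioi 0, R u (φ (t - u)) := by
  have reflect := (Measure.measurePreserving_sub_left volume t).setIntegral_preimage_emb
    (MeasurableEquiv.subLeft t).measurableEmbedding (fun s => R (t - s) (φ s)) (Set.Iio t)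
  simpa only [infConv, Set.preimage_const_sub_Iio, sub_self, _root_.sub_sub_cancel]
    using reflect.symm

lemma integrableOn_Iio_iff_integrableOn_Ioi {E : Type*} [NormedAddCommGroup E] (g : ℝ → E)
    (t : ℝ) : IntegrableOn g (Set.Iio t) ↔ IntegrableOn (fun u => g (t - u)) (Set.Ioi 0) := by
  have reflect := (Measure.measurePreserving_sub_left volume t).integrableOn_comp_preimage
    (MeasurableEquiv.subLeft t).measurableEmbedding (f := g) (s := Set.Iio t)
  simpa only [Set.preimage_const_sub_Iio, sub_self, Function.comp_def] using reflect.symm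

namespace PolyGrowth

lemma sub {b : ℝ} {φ ψ : ℝ → X} (hφ : PolyGrowth b φ) (hψ : PolyGrowth b ψ) :
    PolyGrowth b (fun t => φ t - ψ t) := by
  obtain ⟨C, hC, hCφ⟩ := hφ
  obtain ⟨D, hD, hDψ⟩ := hψ
  refine ⟨C + D, add_pos hC hD, fun t => (norm_sub_le _ _).trans ?_⟩
  rw [add_mul]
  exact add_le_add (hCφ t) (hDψ t)

lemma of_norm_le {b C : ℝ} {φ : ℝ → X} (hb : 0 ≤ b) (hC : ∀ t, ‖φ t‖ ≤ C) : PolyGrowth b φ := by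
  have hC0 : 0 ≤ C := (norm_nonneg _).trans (hC 0)
  refine ⟨C + 1, by positivity, fun t => ?_⟩
  calc ‖φ t‖ ≤ C + 1 := (hC t).trans (by linarith)
    _ ≤ (C + 1) * (1 + |t|) ^ b := le_mul_of_one_le_right (by positivity)
      (Real.one_le_rpow (by linarith [abs_nonneg t]) hb)

lemma exists_subseq_ae_tendsto_comp_sub_left {E : Type*} [NormedAddCommGroup E] [NormedSpace ℝ E]
    {b : ℝ} {φ : ℝ → E} (hφ : PolyGrowth b φ) (hφm : AEStronglyMeasurable φ)
    {x : ℕ → ℝ} {t : ℝ} (hx : Tendsto x atTop (𝓝 t)) :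
    ∃ ns : ℕ → ℕ, ∀ᵐ u, Tendsto (fun n => φ (x (ns n) - u)) atTop (𝓝 (φ (t - u))) := by
  obtain ⟨C, -, hCφ⟩ := hφ
  let w (s : ℝ) : ℝ := (1 + |s|) ^ (b + 2)
  have w_pos (s : ℝ) : 0 < w s := by positivity
  have w_cont : Continuous w := .rpow_const (by fun_prop) fun s => .inl (by positivity)
  have weighted_integrable : Integrable fun s => (w s)⁻¹ • φ s := by
    refine ((integrable_one_add_norm (μ := volume) (E := ℝ) (r := 2) (by simp)).const_mul C).mono'
      ((w_cont.inv₀ fun s => (w_pos s).ne').aestronglyMeasurable.smul hφm) (.of_forall fun s => ?_)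
    have h0 : 0 < 1 + |s| := by positivity
    calc ‖(w s)⁻¹ • φ s‖ = (w s)⁻¹ * ‖φ s‖ := by
          rw [norm_smul, norm_inv, Real.norm_of_nonneg (w_pos s).le]
      _ ≤ (w s)⁻¹ * (C * (1 + |s|) ^ b) := by gcongr; exact hCφ s
      _ = C * (1 + ‖s‖) ^ (-2 : ℝ) := by
          simp only [w, Real.norm_eq_abs, Real.rpow_add h0, Real.rpow_neg h0.le]
          field_simp
  obtain ⟨ns, ns_mono, hns⟩ := _root_.exists_subseq_ae_tendsto_comp_sub_left weighted_integrable hx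
  refine ⟨ns, ?_⟩
  filter_upwards [hns] with u hu
  have := ((w_cont.tendsto (t - u)).comp ((hx.comp ns_mono.tendsto_atTop).sub_const u)).smul hu
  simpa only [Function.comp_apply, smul_smul, mul_inv_cancel₀ (w_pos _).ne', one_smul] using this

end PolyGrowth

lemma integrableOn_rpow_div_one_add_rpow_mul {β γ b : ℝ} (hβ : 0 < β) (hb : 0 ≤ b)
    (hbγ : b < γ - β) :
    IntegrableOn (fun u : ℝ => u ^ (β - 1) / (1 + u ^ γ) * (1 + u) ^ b) (Set.Ioi 0) := by
  have meas : Measurable fun u : ℝ => u ^ (β - 1) / (1 + u ^ γ) * (1 + u) ^ b := by fun_prop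
  rw [← Set.Ioc_union_Ioi_eq_Ioi (zero_le_one (α := ℝ))]
  refine .union ?_ ?_
  · have dominating : IntegrableOn (fun u : ℝ => u ^ (β - 1) * 2 ^ b) (Set.Ioc 0 1) :=
      ((intervalIntegrable_iff_integrableOn_Ioc_of_le zero_le_one).1
        (intervalIntegral.intervalIntegrable_rpow' (by linarith))).mul_const _
    refine dominating.mono' meas.aestronglyMeasurable ?_
    filter_upwards [ae_restrict_mem measurableSet_Ioc] with u ⟨hu0, hu1⟩
    rw [Real.norm_of_nonneg (by positivity)]
    gcongr
    · exact div_le_self (by positivity) (le_add_of_nonneg_right (by positivity))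
    · linarith
  · have dominating : IntegrableOn (fun u : ℝ => u ^ (β - 1 - γ + b) * 2 ^ b) (Set.Ioi 1) :=
      (integrableOn_Ioi_rpow_of_lt (by linarith) one_pos).mul_const _
    refine dominating.mono' meas.aestronglyMeasurable ?_
    filter_upwards [ae_restrict_mem measurableSet_Ioi] with u (hu1 : 1 < u)
    have hu0 : 0 < u := by linarith
    rw [Real.norm_of_nonneg (by positivity)]
    calc u ^ (β - 1) / (1 + u ^ γ) * (1 + u) ^ b
        ≤ u ^ (β - 1) / u ^ γ * (2 * u) ^ b := by gcongr <;> linarith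
      _ = u ^ (β - 1 - γ + b) * 2 ^ b := by
        rw [Real.mul_rpow zero_le_two hu0.le, Real.rpow_add hu0, Real.rpow_sub hu0 _ γ]
        ring

namespace IsMajorizedKernel

variable {R : ℝ → X →L[𝕜] Y} {k : ℝ → ℝ} {b : ℝ}

lemma majorant_nonneg (hR : IsMajorizedKernel R k b) {u : ℝ} (hu : 0 < u) : 0 ≤ k u :=
  (norm_nonneg _).trans (hR.norm_le hu)

lemma integrableOn_majorant (hR : IsMajorizedKernel R k b) (hb : 0 ≤ b) :
    IntegrableOn k (Set.Ioi 0) := by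
  have key : IntegrableOn (fun u => (1 + u) ^ (-b) * (k u * (1 + u) ^ b)) (Set.Ioi 0) := by
    refine hR.integrableOn.bdd_mul (c := 1) (Measurable.aestronglyMeasurable (by fun_prop)) ?_
    filter_upwards [ae_restrict_mem measurableSet_Ioi] with u (hu : 0 < u)
    rw [Real.norm_of_nonneg (by positivity)]
    exact Real.rpow_le_one_of_one_le_of_nonpos (by linarith) (by linarith)
  refine key.congr_fun (fun u (hu : 0 < u) => ?_) measurableSet_Ioi
  have hu1 : 0 < 1 + u := by linarith
  simp only [Real.rpow_neg hu1.le]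
  field_simp

lemma norm_apply_comp_sub_le (hR : IsMajorizedKernel R k b) (hb : 0 ≤ b) {φ : ℝ → X} {C : ℝ}
    (hC : 0 ≤ C) (hφ : ∀ t, ‖φ t‖ ≤ C * (1 + |t|) ^ b) {t u w : ℝ} (hu : 0 < u)
    (hw : 1 + |t - u| ≤ w * (1 + u)) :
    ‖R u (φ (t - u))‖ ≤ C * w ^ b * (k u * (1 + u) ^ b) := by
  have hw0 : 0 ≤ w := by
    refine le_of_mul_le_mul_right (a := 1 + u) ?_ (by positivity)
    linarith [abs_nonneg (t - u)]
  calc ‖R u (φ (t - u))‖ ≤ ‖R u‖ * ‖φ (t - u)‖ := (R u).le_opNorm _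
    _ ≤ k u * (C * (w * (1 + u)) ^ b) := by
      have := hR.majorant_nonneg hu
      gcongr
      · exact hR.norm_le hu
      · exact (hφ _).trans (by gcongr)
    _ = C * w ^ b * (k u * (1 + u) ^ b) := by
      rw [Real.mul_rpow hw0 (by positivity)]
      ring

lemma norm_apply_comp_sub_le_of_abs_le (hR : IsMajorizedKernel R k b) (hb : 0 ≤ b) {φ : ℝ → X}
    {C : ℝ} (hC : 0 ≤ C) (hφ : ∀ t, ‖φ t‖ ≤ C * (1 + |t|) ^ b) {t T u : ℝ} (ht : |t| ≤ T)
    (hu : 0 < u) : ‖R u (φ (t - u))‖ ≤ C * (1 + T) ^ b * (k u * (1 + u) ^ b) := by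
  refine hR.norm_apply_comp_sub_le hb hC hφ hu ?_
  have triangle : |t - u| ≤ T + u := (abs_sub _ _).trans (by rw [abs_of_pos hu]; gcongr)
  nlinarith [(abs_nonneg t).trans ht]

lemma aestronglyMeasurable_apply_comp_sub (hR : IsMajorizedKernel R k b) {φ : ℝ → X}
    (hφ : AEStronglyMeasurable φ) (t : ℝ) :
    AEStronglyMeasurable (fun u => R u (φ (t - u))) (volume.restrict (Set.Ioi 0)) :=
  aestronglyMeasurable_apply_of_forall_apply hR.aestronglyMeasurable
    (hφ.comp_quasiMeasurePreserving
      (Measure.measurePreserving_sub_left volume t).quasiMeasurePreserving).restrict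

lemma integrableOn_apply_comp_sub (hR : IsMajorizedKernel R k b) (hb : 0 ≤ b) {φ : ℝ → X}
    (hφm : AEStronglyMeasurable φ) (hφ : PolyGrowth b φ) (t : ℝ) :
    IntegrableOn (fun u => R u (φ (t - u))) (Set.Ioi 0) := by
  obtain ⟨C, hC, hCφ⟩ := hφ
  refine (hR.integrableOn.const_mul (C * (1 + |t|) ^ b)).mono'
    (hR.aestronglyMeasurable_apply_comp_sub hφm t) ?_
  filter_upwards [ae_restrict_mem measurableSet_Ioi] with u hu
  exact hR.norm_apply_comp_sub_le_of_abs_le hb hC.le hCφ le_rfl hu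

lemma enorm_apply_le (hR : IsMajorizedKernel R k b) {u : ℝ} (hu : 0 < u) (x : X) :
    ‖R u x‖ₑ ≤ ENNReal.ofReal (k u) * ‖x‖ₑ := by
  rw [← ofReal_norm, ← ofReal_norm, ← ENNReal.ofReal_mul (hR.majorant_nonneg hu)]
  exact ENNReal.ofReal_le_ofReal ((R u).le_of_opNorm_le (hR.norm_le hu) x)

variable [NormedSpace ℝ Y]

lemma polyGrowth_infConv (hR : IsMajorizedKernel R k b) (hb : 0 ≤ b) {φ : ℝ → X}
    (hφ : PolyGrowth b φ) : PolyGrowth b (infConv R φ) := by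
  obtain ⟨C, hC, hCφ⟩ := hφ
  let J := ∫ u in Set.Ioi 0, k u * (1 + u) ^ b
  have hJ : 0 ≤ J := setIntegral_nonneg measurableSet_Ioi fun u (hu : 0 < u) =>
    mul_nonneg (hR.majorant_nonneg hu) (by positivity)
  refine ⟨C * J + 1, by positivity, fun t => ?_⟩
  calc ‖infConv R φ t‖ ≤ ∫ u in Set.Ioi 0, C * (1 + |t|) ^ b * (k u * (1 + u) ^ b) := by
        rw [infConv_eq_setIntegral_Ioi]
        refine norm_integral_le_of_norm_le (hR.integrableOn.const_mul _) ?_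
        filter_upwards [ae_restrict_mem measurableSet_Ioi] with u hu
        exact hR.norm_apply_comp_sub_le_of_abs_le hb hC.le hCφ le_rfl hu
    _ = C * J * (1 + |t|) ^ b := by rw [integral_const_mul]; ring
    _ ≤ (C * J + 1) * (1 + |t|) ^ b := by gcongr; linarith

lemma infConv_sub (hR : IsMajorizedKernel R k b) (hb : 0 ≤ b) {φ ψ : ℝ → X}
    (hφm : AEStronglyMeasurable φ) (hφ : PolyGrowth b φ) (hψm : AEStronglyMeasurable ψ)
    (hψ : PolyGrowth b ψ) (t : ℝ) :
    infConv R (fun s => φ s - ψ s) t = infConv R φ t - infConv R ψ t := by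
  simp only [infConv_eq_setIntegral_Ioi, map_sub]
  exact integral_sub (hR.integrableOn_apply_comp_sub hb hφm hφ t)
    (hR.integrableOn_apply_comp_sub hb hψm hψ t)

/- For merely measurable `φ` the translates `φ (x n - u)` need not converge to `φ (t - u)` for any
given `u`; they do along a subsequence, for almost every `u`, which suffices here. -/
lemma continuous_infConv [NormedSpace ℝ X] (hR : IsMajorizedKernel R k b) (hb : 0 ≤ b) {φ : ℝ → X}
    (hφm : AEStronglyMeasurable φ) (hφ : PolyGrowth b φ) : Continuous (infConv R φ) := by
  refine SeqContinuous.continuous fun {x t} hx => tendsto_of_subseq_tendsto fun ns hns => ?_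
  obtain ⟨ms, hms⟩ := hφ.exists_subseq_ae_tendsto_comp_sub_left hφm (hx.comp hns)
  obtain ⟨C, hC, hCφ⟩ := hφ
  obtain ⟨T, hT⟩ : ∃ T, ∀ n, |x n| ≤ T := by
    obtain ⟨T, hT⟩ := (Metric.isBounded_range_of_tendsto x hx).exists_norm_le
    exact ⟨T, fun n => hT _ ⟨n, rfl⟩⟩
  refine ⟨ms, ?_⟩
  simp only [infConv_eq_setIntegral_Ioi, Function.comp_apply]
  refine tendsto_integral_of_dominated_convergence
    (fun u => C * (1 + T) ^ b * (k u * (1 + u) ^ b))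
    (fun n => hR.aestronglyMeasurable_apply_comp_sub hφm _) (hR.integrableOn.const_mul _)
    (fun n => ?_) ?_
  · filter_upwards [ae_restrict_mem measurableSet_Ioi] with u hu
    exact hR.norm_apply_comp_sub_le_of_abs_le hb hC.le hCφ (hT _) hu
  · filter_upwards [ae_restrict_of_ae hms] with u hu
    exact ((R u).continuous.tendsto _).comp hu

lemma exists_enorm_infConv_le_add_tail (hR : IsMajorizedKernel R k b) (hb : 0 ≤ b) {φ : ℝ → X}
    (hφ : PolyGrowth b φ) :
    ∃ η : ℝ → ℝ≥0∞, Tendsto η atTop (𝓝 0) ∧ ∀ t, 0 ≤ t → ∀ s, |s| ≤ t →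
      ‖infConv R φ s‖ₑ ≤ (∫⁻ u in Set.Ioc 0 t, ENNReal.ofReal (k u) * ‖φ (s - u)‖ₑ) + η t := by
  obtain ⟨C, hC, hCφ⟩ := hφ
  let tail (t : ℝ) : ℝ := ∫ u in Set.Ioi t, C * 2 ^ b * (k u * (1 + u) ^ b)
  have tail_tendsto : Tendsto (fun t => ENNReal.ofReal (tail t)) atTop (𝓝 0) := by
    simpa using ENNReal.tendsto_ofReal (tendsto_integral_Ioi_zero tendsto_id)
  refine ⟨_, tail_tendsto, fun t ht s hs => ?_⟩
  have far : ∫⁻ u in Set.Ioi t, ‖R u (φ (s - u))‖ₑ ≤ ENNReal.ofReal (tail t) := by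
    have integrable := (hR.integrableOn.mono_set (Set.Ioi_subset_Ioi ht)).const_mul (C * 2 ^ b)
    rw [ofReal_integral_eq_lintegral_ofReal integrable]
    · refine setLIntegral_mono' measurableSet_Ioi fun u (hu : t < u) => ?_
      rw [← ofReal_norm]
      refine ENNReal.ofReal_le_ofReal
        (hR.norm_apply_comp_sub_le hb hC.le hCφ (ht.trans_lt hu) ?_)
      have triangle : |s - u| ≤ t + u :=
        (abs_sub _ _).trans (by rw [abs_of_pos (ht.trans_lt hu)]; gcongr)
      linarith
    · filter_upwards [ae_restrict_mem measurableSet_Ioi] with u (hu : t < u)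
      have hu0 : 0 < u := ht.trans_lt hu
      have := hR.majorant_nonneg hu0
      simp only [Pi.zero_apply]
      positivity
  calc ‖infConv R φ s‖ₑ ≤ ∫⁻ u in Set.Ioi 0, ‖R u (φ (s - u))‖ₑ := by
        rw [infConv_eq_setIntegral_Ioi]
        exact enorm_integral_le_lintegral_enorm _
    _ = (∫⁻ u in Set.Ioc 0 t, ‖R u (φ (s - u))‖ₑ) + ∫⁻ u in Set.Ioi t, ‖R u (φ (s - u))‖ₑ := by
        rw [← lintegral_union measurableSet_Ioi Set.Ioc_disjoint_Ioi_same,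
          Set.Ioc_union_Ioi_eq_Ioi ht]
    _ ≤ _ := by
        gcongr ?_ + ?_
        exact setLIntegral_mono' measurableSet_Ioc fun u hu => hR.enorm_apply_le hu.1 _

lemma exists_limsup_besMean_infConv_le (hR : IsMajorizedKernel R k b) (hb : 0 ≤ b) {α a p : ℝ}
    (hp : 1 ≤ p) (hαp : 1 ≤ α * p) (hap : 1 ≤ a * p) :
    ∃ C : ℝ≥0∞, C ≠ ⊤ ∧ ∀ φ : ℝ → X, AEStronglyMeasurable φ → PolyGrowth b φ →
      limsup (besMean α a p fun s => ‖infConv R φ s‖ₑ) atTop ≤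
        C * limsup (besMean α a p fun s => ‖φ s‖ₑ) atTop := by
  have hp0 : 0 < p := by linarith
  have hα : 0 < α := pos_of_mul_pos_left (by linarith : 0 < α * p) hp0.le
  have k_integrable := hR.integrableOn_majorant hb
  let κ : ℝ≥0∞ := ∫⁻ u in Set.Ioi 0, ENNReal.ofReal (k u)
  let c : ℝ≥0∞ := (2 ^ (α * p - 1)) ^ (1 / p)
  have c_ne_top : c ≠ ⊤ := ENNReal.rpow_ne_top_of_nonneg (by positivity)
    (ENNReal.rpow_ne_top_of_nonneg (by linarith) (by norm_num))
  have κ_pow_ne_top : κ ^ α ≠ ⊤ :=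
    ENNReal.rpow_ne_top_of_nonneg hα.le k_integrable.lintegral_lt_top.ne
  have C_ne_top : c * (ENNReal.ofReal (2 ^ a) * κ ^ α) ≠ ⊤ :=
    ENNReal.mul_ne_top c_ne_top (ENNReal.mul_ne_top ENNReal.ofReal_ne_top κ_pow_ne_top)
  refine ⟨_, C_ne_top, fun φ hφm hφ => ?_⟩
  obtain ⟨η, hη, infConv_le⟩ := hR.exists_enorm_infConv_le_add_tail hb hφ
  have error_tendsto : Tendsto (fun t => c * (ENNReal.ofReal (2 ^ (1 / p)) * η t ^ α)) atTop
      (𝓝 0) := by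
    have := ENNReal.Tendsto.const_mul (ENNReal.Tendsto.const_mul (hη.ennrpow_const α)
      (.inr (ENNReal.ofReal_ne_top (r := 2 ^ (1 / p))))) (.inr c_ne_top)
    simpa only [ENNReal.zero_rpow_of_pos hα, mul_zero] using this
  refine limsup_le_const_mul_limsup_of_le_add C_ne_top
    (tendsto_id.const_mul_atTop (two_pos : (0 : ℝ) < 2)) error_tendsto ?_
  filter_upwards [eventually_ge_atTop 1] with t ht
  refine (besMean_le_of_le_lintegral_Ioc_add hαp hp hap
    k_integrable.aemeasurable.ennreal_ofReal hφm.enorm ht (infConv_le t (by linarith))).trans_eq ?_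
  rw [mul_add, ← mul_assoc c, id]

end IsMajorizedKernel

lemma IsMajorizedKernel.of_continuousOn {R : ℝ → X →L[𝕜] Y}
    (hRcont : ∀ x, ContinuousOn (fun t => R t x) (Set.Ioi 0)) {M β γ b : ℝ} (hβ : 0 < β)
    (hR : ∀ t, 0 < t → ‖R t‖ ≤ M * t ^ (β - 1) / (1 + t ^ γ)) (hb : 0 ≤ b) (hbγ : b < γ - β) :
    IsMajorizedKernel R (fun t => M * t ^ (β - 1) / (1 + t ^ γ)) b where
  aestronglyMeasurable x := (hRcont x).aestronglyMeasurable measurableSet_Ioi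
  norm_le := hR _
  integrableOn := by
    simpa only [IntegrableOn, mul_div_assoc, mul_assoc] using
      (integrableOn_rpow_div_one_add_rpow_mul hβ hb hbγ).const_mul M

end InfConv

section Complex

variable {X Y : Type*} [NormedAddCommGroup X] [NormedSpace ℂ X] [NormedAddCommGroup Y]
  [NormedSpace ℂ Y]

lemma memBes1_iff_besMean {α a p : ℝ} (hαp : 0 ≤ α * p) {g : ℝ → X} :
    MemBes1 α a p g ↔ ∃ P : ℕ → ℝ → X, (∀ n, IsTrigPoly1 (P n)) ∧
      Tendsto (fun n => limsup (besMean α a p fun s => ‖g s - P n s‖ₑ) atTop) atTop (𝓝 0) := by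
  simp only [MemBes1, ← ENNReal.ofReal_rpow_of_nonneg (norm_nonneg _) hαp, ofReal_norm]
  rfl

namespace IsTrigPoly1

protected lemma continuous {P : ℝ → X} (hP : IsTrigPoly1 P) : Continuous P := by
  obtain ⟨m, lam, c, hP⟩ := hP
  rw [funext hP]
  fun_prop

lemma polyGrowth {P : ℝ → X} (hP : IsTrigPoly1 P) {b : ℝ} (hb : 0 ≤ b) : PolyGrowth b P := by
  obtain ⟨m, lam, c, hP⟩ := hP
  refine .of_norm_le (C := ∑ j, ‖c j‖) hb fun t => ?_
  rw [hP]
  refine (norm_sum_le _ _).trans (Finset.sum_le_sum fun j _ => ?_)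
  rw [norm_smul, Complex.norm_exp_I_mul_ofReal, one_mul]

end IsTrigPoly1

lemma infConv_exp_smul (R : ℝ → X →L[ℂ] Y) (lam : ℝ) (c : X) (t : ℝ) :
    infConv R (fun s => Complex.exp (Complex.I * ((lam * s : ℝ) : ℂ)) • c) t =
      Complex.exp (Complex.I * ((lam * t : ℝ) : ℂ)) •
        infConv R (fun s => Complex.exp (Complex.I * ((lam * s : ℝ) : ℂ)) • c) 0 := by
  simp only [infConv_eq_setIntegral_Ioi, ← integral_smul, ← map_smul, smul_smul,
    ← Complex.exp_add]
  congr! 5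
  push_cast
  ring_nf

lemma IsMajorizedKernel.isTrigPoly1_infConv {R : ℝ → X →L[ℂ] Y} {k : ℝ → ℝ} {b : ℝ}
    (hR : IsMajorizedKernel R k b) (hb : 0 ≤ b) {P : ℝ → X} (hP : IsTrigPoly1 P) :
    IsTrigPoly1 (infConv R P) := by
  obtain ⟨m, lam, c, hP⟩ := hP
  let term (j : Fin m) (s : ℝ) : X := Complex.exp (Complex.I * ((lam j * s : ℝ) : ℂ)) • c j
  refine ⟨m, lam, fun j => infConv R (term j) 0, fun t => ?_⟩
  have term_integrable (j : Fin m) :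
      IntegrableOn (fun u => R u (term j (t - u))) (Set.Ioi 0) := by
    have term_cont : Continuous (term j) := by fun_prop
    refine hR.integrableOn_apply_comp_sub hb term_cont.aestronglyMeasurable
      (.of_norm_le (C := ‖c j‖) hb fun s => ?_) t
    rw [norm_smul, Complex.norm_exp_I_mul_ofReal, one_mul]
  calc infConv R P t = ∑ j, infConv R (term j) t := by
        simp only [infConv_eq_setIntegral_Ioi, hP, map_sum]
        exact integral_finsetSum _ fun j _ => term_integrable j
    _ = _ := Finset.sum_congr rfl fun j _ => infConv_exp_smul R (lam j) (c j) t

lemma IsMajorizedKernel.memBes1_infConv {R : ℝ → X →L[ℂ] Y} {k : ℝ → ℝ} {b : ℝ}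
    (hR : IsMajorizedKernel R k b) (hb : 0 ≤ b) {α a p : ℝ} (hp : 1 ≤ p) (hαp : 1 ≤ α * p)
    (hap : 1 ≤ a * p) {f : ℝ → X} (hfm : AEStronglyMeasurable f) (hfgrow : PolyGrowth b f)
    (hf : MemBes1 α a p f) : MemBes1 α a p (infConv R f) := by
  rw [memBes1_iff_besMean (by linarith)] at hf ⊢
  obtain ⟨P, hP, hlim⟩ := hf
  obtain ⟨C, hC, limsup_le⟩ := hR.exists_limsup_besMean_infConv_le hb hp hαp hap
  have hPm (n : ℕ) : AEStronglyMeasurable (P n) := (hP n).continuous.aestronglyMeasurable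
  refine ⟨fun n => infConv R (P n), fun n => hR.isTrigPoly1_infConv hb (hP n), ?_⟩
  simp only [← hR.infConv_sub hb hfm hfgrow (hPm _) ((hP _).polyGrowth hb)]
  have bound_tendsto := ENNReal.Tendsto.const_mul hlim (.inr hC)
  rw [mul_zero] at bound_tendsto
  exact tendsto_of_tendsto_of_tendsto_of_le_of_le tendsto_const_nhds bound_tendsto
    (fun _ => zero_le) fun n =>
      limsup_le _ (hfm.sub (hPm n)) (hfgrow.sub ((hP n).polyGrowth hb))

theorem besicovitch_stmt17_general [CompleteSpace Y] {R : ℝ → X →L[ℂ] Y} {k : ℝ → ℝ} {b : ℝ}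
    (hR : IsMajorizedKernel R k b) (hb : 0 ≤ b) {a α p : ℝ} (hp : 1 ≤ p) (hαp : 1 ≤ α * p)
    (hap : 1 ≤ a * p) {f : ℝ → X} (hfm : AEStronglyMeasurable f) (hf : MemBes1 α a p f)
    (hfgrow : PolyGrowth b f) :
    (∀ t : ℝ, IntegrableOn (fun s => R (t - s) (f s)) (Set.Iio t)) ∧
      Continuous (infConv R f) ∧ MemBes1 α a p (infConv R f) ∧ PolyGrowth b (infConv R f) := by
  refine ⟨fun t => ?_, hR.continuous_infConv hb hfm hfgrow,
    hR.memBes1_infConv hb hp hαp hap hfm hfgrow hf, hR.polyGrowth_infConv hb hfgrow⟩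
  rw [integrableOn_Iio_iff_integrableOn_Ioi]
  simpa only [_root_.sub_sub_cancel] using hR.integrableOn_apply_comp_sub hb hfm hfgrow t

end Complex

/-- invariance of the class `e-(x^α,t^{−a})-B^p(ℝ : ·)` under the
infinite convolution product `F(t) = ∫_{−∞}^t R(t−s) f(s) ds`, for a polynomially
bounded inhomogeneity `f`. -/
theorem besicovitch_stmt17 {X Y : Type*}
    [NormedAddCommGroup X] [NormedSpace ℂ X] [CompleteSpace X]
    [NormedAddCommGroup Y] [NormedSpace ℂ Y] [CompleteSpace Y]
    (R : ℝ → X →L[ℂ] Y)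
    (hRcont : ∀ x : X, ContinuousOn (fun t => R t x) (Set.Ioi 0))
    (M β γ : ℝ) (hM : 0 < M) (hβ : β ∈ Set.Ioc (0 : ℝ) 1) (hγ : 1 < γ)
    (hR : ∀ t : ℝ, 0 < t → ‖R t‖ ≤ M * t ^ (β - 1) / (1 + t ^ γ))
    (a α p : ℝ) (ha : 0 < a) (hα : 0 < α) (hp : 1 ≤ p)
    (hαp : 1 ≤ α * p) (hap : 1 ≤ a * p)
    (hcase1 : 1 < α * p → -1 < α * p * (β - 1) / (α * p - 1))
    (hcase2 : α * p = 1 → β = 1)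
    (f : ℝ → X) (hfmeas : StronglyMeasurable f)
    (hf : MemBes1 α a p f)
    (b : ℝ) (hb : 0 ≤ b) (hbγ : b < γ - β)
    (M₀ : ℝ) (hM₀ : 0 < M₀)
    (hfgrow : ∀ t : ℝ, ‖f t‖ ≤ M₀ * (1 + |t|) ^ b) :
    (∀ t : ℝ, IntegrableOn (fun s => R (t - s) (f s)) (Set.Iio t)) ∧
    Continuous (fun t : ℝ => ∫ s in Set.Iio t, R (t - s) (f s)) ∧
    MemBes1 α a p (fun t : ℝ => ∫ s in Set.Iio t, R (t - s) (f s)) ∧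
    (∃ M' : ℝ, 0 < M' ∧ ∀ t : ℝ,
      ‖∫ s in Set.Iio t, R (t - s) (f s)‖ ≤ M' * (1 + |t|) ^ b) := by
  exact besicovitch_stmt17_general (.of_continuousOn hRcont hβ.1 hR hb hbγ) hb
    hp hαp hap hfmeas.aestronglyMeasurable hf ⟨M₀, hM₀, hfgrow⟩
end
end
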